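/- Let X be a Banach space of analytic functions on 𝔻 in which the analytic polynomials are dense, with limsup_{n→∞} ‖z^n‖_X^{1/n} ≤ 1, and which is continuously embedded in H². If the Cauchy dual X' is continuously embedded in H^p for some p > 0, then the pair (X, ϑ) satisfies the (P)-property for every inner function ϑ. -/

import Mathlib

open MeasureTheory Complex Filter Set Metric Polynomial

noncomputable section

/-- Normalized arc-length measure on the unit circle 𝕋, realized on the
parameter interval `(0, 2π]` via `θ ↦ e^{iθ}`. -/
def arcM : Measure ℝ :=
  (ENNReal.ofReal (2 * Real.pi))⁻¹ • (volume.restrict (Set.Ioc 0 (2 * Real.pi)))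

/-- The open unit disc 𝔻 ⊆ ℂ. -/
def uDisc : Set ℂ := Metric.ball 0 1

/-- The unit circle 𝕋 ⊆ ℂ. -/
def uCircle : Set ℂ := Metric.sphere 0 1

/-- The boundary point `e^{iθ}`. -/
def bpt (θ : ℝ) : ℂ := Complex.exp (θ * Complex.I)

/-- `f` is analytic on the open unit disc. -/
def AnalyticOnDisc (f : ℂ → ℂ) : Prop := DifferentiableOn ℂ f uDisc

/-- The integral mean `∫_𝕋 |f(rζ)|^p dm(ζ)`. -/
def hMean (p : ℝ) (f : ℂ → ℂ) (r : ℝ) : ℝ := ∫ θ, ‖f ((r : ℂ) * bpt θ)‖ ^ p ∂arcM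

/-- Membership in the Hardy space `H^p`, `0 < p < ∞`. -/
def MemHp (p : ℝ) (f : ℂ → ℂ) : Prop :=
  AnalyticOnDisc f ∧ BddAbove (hMean p f '' Set.Ioo 0 1)

/-- The Hardy space (quasi-)norm `‖f‖_{H^p} = (sup_{0<r<1} ∫_𝕋 |f(rζ)|^p dm)^{min(1,1/p)}`. -/
def hardyNorm (p : ℝ) (f : ℂ → ℂ) : ℝ :=
  sSup (hMean p f '' Set.Ioo 0 1) ^ min 1 (1 / p)

/-- Membership in `H^∞`: bounded analytic functions on 𝔻. -/
def MemHinf (f : ℂ → ℂ) : Prop :=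
  AnalyticOnDisc f ∧ ∃ C : ℝ, ∀ z ∈ uDisc, ‖f z‖ ≤ C

/-- `F` is (a representative of) the boundary function of `f` : radial limits a.e. on 𝕋. -/
def BoundaryFn (f : ℂ → ℂ) (F : ℝ → ℂ) : Prop :=
  ∀ᵐ θ ∂arcM, Filter.Tendsto (fun r : ℝ => f ((r : ℂ) * bpt θ))
    (nhdsWithin 1 (Set.Iio 1)) (nhds (F θ))

/-- `ϑ` is an inner function: bounded analytic with unimodular boundary values a.e. -/
def IsInner (ϑ : ℂ → ℂ) : Prop :=
  MemHinf ϑ ∧ ∃ Θ : ℝ → ℂ, BoundaryFn ϑ Θ ∧ ∀ᵐ θ ∂arcM, ‖Θ θ‖ = 1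

/-- The boundary function of `f` lies in `ϑ ⋅ conj(H^p_0)`. -/
def PseudoCont (p : ℝ) (ϑ f : ℂ → ℂ) : Prop :=
  ∃ F Θ G : ℝ → ℂ, ∃ g : ℂ → ℂ,
    BoundaryFn f F ∧ BoundaryFn ϑ Θ ∧ MemHp p g ∧ g 0 = 0 ∧ BoundaryFn g G ∧
    ∀ᵐ θ ∂arcM, F θ = Θ θ * (starRingEnd ℂ) (G θ)

/-- The boundary function of `f` lies in `ϑ ⋅ conj(H^∞_0)`. -/
def PseudoContInf (ϑ f : ℂ → ℂ) : Prop :=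
  ∃ F Θ G : ℝ → ℂ, ∃ g : ℂ → ℂ,
    BoundaryFn f F ∧ BoundaryFn ϑ Θ ∧ MemHinf g ∧ g 0 = 0 ∧ BoundaryFn g G ∧
    ∀ᵐ θ ∂arcM, F θ = Θ θ * (starRingEnd ℂ) (G θ)

/-- `f` extends analytically across the boundary set `S ⊆ 𝕋`. -/
def ExtendsAcross (f : ℂ → ℂ) (S : Set ℂ) : Prop :=
  ∃ U : Set ℂ, ∃ g : ℂ → ℂ, IsOpen U ∧ S ⊆ U ∧
    DifferentiableOn ℂ g (uDisc ∪ U) ∧ Set.EqOn g f uDisc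

/-- The boundary spectrum `σ(ϑ)`: the points of 𝕋 across which `ϑ` admits no
analytic continuation. -/
def bSpectrum (ϑ : ℂ → ℂ) : Set ℂ := {ζ | ζ ∈ uCircle ∧ ¬ ExtendsAcross ϑ {ζ}}

/-- Membership in the space `K^p_ϑ` of pseudocontinuable functions, `0 < p < ∞`:
`f ∈ H^p`, the boundary function of `f` lies in `ϑ ⋅ conj(H^p_0)`, and `f`
continues analytically across `𝕋 ∖ σ(ϑ)`. -/
def MemKp (p : ℝ) (ϑ f : ℂ → ℂ) : Prop :=
  MemHp p f ∧ PseudoCont p ϑ f ∧ ExtendsAcross f (uCircle \ bSpectrum ϑ)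

/-- Membership in `K^∞_ϑ = H^∞ ∩ ϑ ⋅ conj(H^∞_0)`. -/
def MemKinf (ϑ f : ℂ → ℂ) : Prop := MemHinf f ∧ PseudoContInf ϑ f

/-- The backward shift `f ↦ (f - f(0))/z`. -/
def bShift (f : ℂ → ℂ) : ℂ → ℂ :=
  fun z => if z = 0 then deriv f 0 else (f z - f 0) / z

/-- `X ∩ K^p_ϑ` is dense in `K^p_ϑ` in the `H^p` metric. -/
def DenseInKp (p : ℝ) (ϑ : ℂ → ℂ) (X : Set (ℂ → ℂ)) : Prop :=
  ∀ f : ℂ → ℂ, MemKp p ϑ f → ∀ ε > (0 : ℝ), ∃ g ∈ X, MemKp p ϑ g ∧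
    hardyNorm p (fun z => f z - g z) < ε

/-- `X ∩ K^∞_ϑ` is dense in `K^∞_ϑ` in the weak-star topology inherited from
`L^∞(𝕋, m) = (L¹(𝕋, m))^*`. -/
def WStarDenseKinf (ϑ : ℂ → ℂ) (X : Set (ℂ → ℂ)) : Prop :=
  ∀ f : ℂ → ℂ, MemKinf ϑ f → ∀ F : ℝ → ℂ, BoundaryFn f F →
    ∀ (n : ℕ) (h : Fin n → ℝ → ℂ), (∀ i, Integrable (h i) arcM) → ∀ ε > (0 : ℝ),
      ∃ g ∈ X, MemKinf ϑ g ∧ ∃ G : ℝ → ℂ, BoundaryFn g G ∧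
        ∀ i, ‖∫ θ, (F θ - G θ) * h i θ ∂arcM‖ < ε

/-- The Cauchy dual function `𝓛(Λ)(z) = ∑_n conj(Λ(ζ ↦ ζ^n)) zⁿ` associated to a bounded
functional `Λ` on `X`; here `e n ∈ X` represents the monomial `z ↦ zⁿ`. -/
def cauchyDualFn {X : Type*} [NormedAddCommGroup X] [NormedSpace ℂ X]
    (e : ℕ → X) (Λ : X →L[ℂ] ℂ) : ℂ → ℂ :=
  fun z => ∑' n : ℕ, (starRingEnd ℂ) (Λ (e n)) * z ^ n

/-- The weak-star closure of a set of bounded functionals on `X`: `Λ` belongs to the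
closure iff every basic weak-star neighborhood of `Λ` meets the set. -/
def wstarClosure {X : Type*} [NormedAddCommGroup X] [NormedSpace ℂ X]
    (S : Set (X →L[ℂ] ℂ)) : Set (X →L[ℂ] ℂ) :=
  {Λ | ∀ F : Finset X, ∀ ε > (0 : ℝ), ∃ Λ' ∈ S, ∀ x ∈ F, ‖Λ x - Λ' x‖ < ε}

/-- The set of functionals on `X` whose Cauchy dual function is an analytic polynomial
multiple of `ϑ`. -/
def polyMultiples {X : Type*} [NormedAddCommGroup X] [NormedSpace ℂ X]
    (e : ℕ → X) (ϑ : ℂ → ℂ) : Set (X →L[ℂ] ℂ) :=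
  {Λ | ∃ q : Polynomial ℂ, cauchyDualFn e Λ = fun z => ϑ z * q.eval z}

/-- The `(P)`-property of the pair `(X, ϑ)`: `[ϑ]_{X'} ∩ H² ⊆ ϑ H²`, i.e. every element of
the weak-star closure in the Cauchy dual `X'` of the polynomial multiples of `ϑ` which lies
in `H²` is divisible by `ϑ` in `H²`. -/
def PProperty {X : Type*} [NormedAddCommGroup X] [NormedSpace ℂ X]
    (e : ℕ → X) (ϑ : ℂ → ℂ) : Prop :=
  ∀ Λ ∈ wstarClosure (polyMultiples e ϑ), MemHp 2 (cauchyDualFn e Λ) →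
    ∃ h : ℂ → ℂ, MemHp 2 h ∧ ∀ z ∈ uDisc, cauchyDualFn e Λ z = ϑ z * h z

/-- Membership in the model space `K²_ϑ = H² ∩ ϑ ⋅ conj(H²_0)`. -/
def MemK2 (ϑ f : ℂ → ℂ) : Prop := MemHp 2 f ∧ PseudoCont 2 ϑ f

open Topology in
lemma arcM_univ : arcM Set.univ = 1 := by
  have h : (0:ℝ) < 2 * Real.pi := by positivity
  unfold arcM
  simp only [Measure.smul_apply, MeasurableSet.univ, Measure.restrict_apply, Set.univ_inter,
    Real.volume_Ioc, sub_zero, smul_eq_mul]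
  refine ENNReal.inv_mul_cancel ?_ ENNReal.ofReal_ne_top
  simpa using h

instance : IsProbabilityMeasure arcM := ⟨arcM_univ⟩

lemma integral_arcM {E : Type*} [NormedAddCommGroup E] [NormedSpace ℝ E] (g : ℝ → E) :
    ∫ θ, g θ ∂arcM = (2 * Real.pi)⁻¹ • ∫ θ in (0:ℝ)..(2 * Real.pi), g θ := by
  have h : (0:ℝ) ≤ 2 * Real.pi := by positivity
  unfold arcM
  rw [integral_smul_measure, intervalIntegral.integral_of_le h]
  simp [ENNReal.toReal_inv, ENNReal.toReal_ofReal Real.pi_pos.le]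

lemma bpt_eq (θ : ℝ) : bpt θ = circleMap 0 1 θ := by simp [bpt, circleMap]

@[simp] lemma norm_bpt (θ : ℝ) : ‖bpt θ‖ = 1 := by simp [bpt_eq]

lemma continuous_bpt : Continuous bpt := by unfold bpt; fun_prop

lemma integral_arcM_circle {E : Type*} [NormedAddCommGroup E] [NormedSpace ℝ E] (g : ℂ → E) :
    ∫ θ, g (bpt θ) ∂arcM = Real.circleAverage g 0 1 := by
  rw [integral_arcM, Real.circleAverage_def]
  simp [bpt_eq]

/-- continuous bounded functions are integrable. -/
lemma integrable_arcM {E : Type*} [NormedAddCommGroup E] {g : ℝ → E}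
    (hg : Continuous g) : Integrable g arcM := by
  unfold arcM
  refine Integrable.smul_measure ?_ (by simp [Real.pi_pos])
  exact (hg.integrableOn_Icc).mono_set Set.Ioc_subset_Icc_self

/-- The Poisson kernel. -/
def PK (z : ℂ) (θ : ℝ) : ℝ := poissonKernel 0 z (bpt θ)

lemma PK_eq (z : ℂ) (θ : ℝ) : PK z θ = (1 - ‖z‖ ^ 2) / ‖bpt θ - z‖ ^ 2 := by
  simp [PK, poissonKernel]

lemma bpt_sub_ne {z : ℂ} (hz : ‖z‖ < 1) (θ : ℝ) : 0 < ‖bpt θ - z‖ := by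
  have := norm_sub_norm_le (bpt θ) z
  rw [norm_bpt] at this
  linarith

lemma PK_nonneg {z : ℂ} (hz : ‖z‖ < 1) (θ : ℝ) : 0 ≤ PK z θ := by
  rw [PK_eq]
  have : ‖z‖^2 ≤ 1 := by nlinarith [norm_nonneg z]
  apply div_nonneg <;> [linarith; positivity]

lemma PK_le {z : ℂ} (hz : ‖z‖ < 1) (θ : ℝ) : PK z θ ≤ (1 + ‖z‖) / (1 - ‖z‖) := by
  rw [PK_eq]
  have h1 := norm_sub_norm_le (bpt θ) z
  rw [norm_bpt] at h1
  have h0 := norm_nonneg z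
  rw [div_le_div_iff₀ (by have := bpt_sub_ne hz θ; positivity) (by linarith)]
  have : (1 - ‖z‖)^2 ≤ ‖bpt θ - z‖^2 := by gcongr
  nlinarith

lemma PK_cont {z : ℂ} (hz : ‖z‖ < 1) : Continuous (PK z) := by
  have : PK z = fun θ => (1 - ‖z‖ ^ 2) / ‖bpt θ - z‖ ^ 2 := by ext; exact PK_eq z _
  rw [this]
  have := continuous_bpt
  refine Continuous.div (by fun_prop) (by fun_prop) fun θ => ?_
  have := bpt_sub_ne hz θ
  positivity

lemma poisson_formula {K : ℂ → ℂ} (hK : DiffContOnCl ℂ K (ball 0 1)) {z : ℂ} (hz : ‖z‖ < 1) :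
    ∫ θ, PK z θ • K (bpt θ) ∂arcM = K z := by
  have := hK.circleAverage_poissonKernel_smul (w := z) (by simpa using hz)
  rw [← this, ← integral_arcM_circle]
  rfl

lemma PK_int {z : ℂ} (hz : ‖z‖ < 1) : ∫ θ, PK z θ ∂arcM = 1 := by
  have := poisson_formula (K := fun _ => 1) diffContOnCl_const hz
  simp only [real_smul, mul_one] at this
  rw [integral_complex_ofReal] at this
  exact_mod_cast this

lemma PK_symm (ρ : ℝ) (t θ : ℝ) : PK (ρ * bpt t) θ = PK (ρ * bpt θ) t := by
  rw [PK_eq, PK_eq]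
  have : ‖bpt θ - ρ * bpt t‖ = ‖bpt t - ρ * bpt θ‖ := by
    have e : ∀ a b : ℝ, ‖bpt a - ρ * bpt b‖ ^ 2 = 1 + ρ^2 - 2 * ρ * Real.cos (a - b) := by
      intro a b
      rw [← Complex.normSq_eq_norm_sq, Complex.normSq_apply, Real.cos_sub]
      simp only [bpt, sub_re, sub_im, mul_re, mul_im, exp_ofReal_mul_I_re, exp_ofReal_mul_I_im,
        ofReal_re, ofReal_im]
      have h1 := Real.sin_sq_add_cos_sq a
      have h2 := Real.sin_sq_add_cos_sq b
      linear_combination h1 + ρ^2 * h2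
    have h : ‖bpt θ - ρ * bpt t‖^2 = ‖bpt t - ρ * bpt θ‖^2 := by
      rw [e, e, ← Real.cos_neg]; ring_nf
    exact (sq_eq_sq₀ (norm_nonneg _) (norm_nonneg _)).1 h
  rw [this]; simp

/-- Outer majorant of a power of a function -/
def HasMaj (s : ℝ) (F : ℂ → ℂ) : Prop :=
  ∃ K : ℂ → ℂ, DiffContOnCl ℂ K (ball 0 1) ∧ (∀ w ∈ ball (0:ℂ) 1, ‖F w‖ ^ s ≤ ‖K w‖) ∧
    ∀ w ∈ sphere (0:ℂ) 1, ‖K w‖ = ‖F w‖ ^ s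

lemma HasMaj.mul {s : ℝ} {F G : ℂ → ℂ} (hF : HasMaj s F) (hG : HasMaj s G) :
    HasMaj s (fun w => F w * G w) := by
  obtain ⟨K, hK, h1, h2⟩ := hF
  obtain ⟨L, hL, h3, h4⟩ := hG
  refine ⟨fun w => K w * L w, hK.smul hL, fun w hw => ?_, fun w hw => ?_⟩
  · rw [norm_mul, norm_mul, Real.mul_rpow (norm_nonneg _) (norm_nonneg _)]
    exact mul_le_mul (h1 w hw) (h3 w hw) (Real.rpow_nonneg (norm_nonneg _) _) (norm_nonneg _)
  · rw [norm_mul, norm_mul, Real.mul_rpow (norm_nonneg _) (norm_nonneg _), h2 w hw, h4 w hw]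

lemma HasMaj.const (s : ℝ) (c : ℂ) : HasMaj s (fun _ => c) :=
  ⟨fun _ => ((‖c‖ ^ s : ℝ) : ℂ), diffContOnCl_const,
    fun w hw => by simp [abs_of_nonneg (Real.rpow_nonneg (norm_nonneg c) s)],
    fun w hw => by simp [abs_of_nonneg (Real.rpow_nonneg (norm_nonneg c) s)]⟩

lemma maj_aux {s : ℝ} (hs : 0 < s) {b : ℂ} (hb : ‖b‖ ≤ 1) :
    DiffContOnCl ℂ (fun w => (1 - b * w) ^ (s : ℂ)) (ball 0 1) := by
  constructor
  · intro w hw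
    have hw' : ‖w‖ < 1 := by simpa using hw
    have : ‖b * w‖ < 1 := by
      rw [norm_mul]; nlinarith [norm_nonneg b, norm_nonneg w]
    have h2 : (b * w).re < 1 := lt_of_le_of_lt (re_le_norm _) this
    refine DifferentiableAt.differentiableWithinAt ?_
    refine DifferentiableAt.cpow (by fun_prop) (by fun_prop) ?_
    left; simp only [sub_re, one_re]; linarith
  · intro w hw
    rw [closure_ball _ one_ne_zero] at hw
    have hw' : ‖w‖ ≤ 1 := by simpa using hw
    have hn : ‖b * w‖ ≤ 1 := by
      rw [norm_mul]; nlinarith [norm_nonneg b, norm_nonneg w]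
    have h2 : (b * w).re ≤ 1 := le_trans (re_le_norm _) hn
    refine ContinuousAt.continuousWithinAt ?_
    by_cases h : 1 - b * w = 0
    · have hc : ContinuousAt (fun p : ℂ × ℂ => p.1 ^ p.2) (1 - b * w, (s:ℂ)) := by
        rw [h]; exact continuousAt_cpow_zero_of_re_pos (by simpa using hs)
      exact ContinuousAt.comp (f := fun w : ℂ => ((1 - b * w, (s:ℂ)) : ℂ × ℂ)) hc (by fun_prop)
    · refine ContinuousAt.cpow (by fun_prop) (by fun_prop) ?_
      left
      simp only [sub_re, one_re]
      rcases lt_or_eq_of_le h2 with h3 | h3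
      · linarith
      · exfalso
        apply h
        have h4 : normSq (b * w) ≤ 1 := by
          rw [Complex.normSq_eq_norm_sq]; nlinarith [norm_nonneg (b*w)]
        rw [Complex.normSq_apply, h3] at h4
        have h5 : (b * w).im = 0 := by nlinarith [sq_nonneg (b*w).im]
        have : b * w = 1 := Complex.ext (by simpa using h3) (by simpa using h5)
        rw [this]; ring

lemma norm_cpow_pos {s : ℝ} (_hs : 0 < s) (z : ℂ) : ‖z ^ (s:ℂ)‖ = ‖z‖ ^ s := by
  exact Complex.norm_cpow_real z s

lemma HasMaj.linear {s : ℝ} (hs : 0 < s) (a : ℂ) : HasMaj s (fun w => w - a) := by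
  rcases lt_or_ge ‖a‖ 1 with ha | ha
  · have key : ∀ w : ℂ, ‖1 - (starRingEnd ℂ) a * w‖ ^ 2 - ‖w - a‖ ^ 2
        = (1 - ‖w‖^2) * (1 - ‖a‖^2) := by
      intro w
      simp only [← Complex.normSq_eq_norm_sq, Complex.normSq_apply, sub_re, sub_im, mul_re,
        mul_im, one_re, one_im, conj_re, conj_im]
      ring
    refine ⟨fun w => (1 - (starRingEnd ℂ) a * w) ^ (s:ℂ), maj_aux hs (by simpa using ha.le),
      fun w hw => ?_, fun w hw => ?_⟩
    · rw [norm_cpow_pos hs]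
      have hw' : ‖w‖ < 1 := by simpa using hw
      refine Real.rpow_le_rpow (norm_nonneg _) ?_ hs.le
      refine le_of_sq_le_sq ?_ (norm_nonneg _)
      have := key w
      have h1 : 0 ≤ (1 - ‖w‖^2) * (1 - ‖a‖^2) := by
        apply mul_nonneg <;> nlinarith [norm_nonneg w, norm_nonneg a]
      linarith
    · rw [norm_cpow_pos hs]
      have hw' : ‖w‖ = 1 := by simpa using hw
      have := key w
      rw [hw'] at this
      congr 1
      refine (sq_eq_sq₀ (norm_nonneg _) (norm_nonneg _)).1 ?_
      linarith
  · have h0 : a ≠ 0 := by rintro rfl; simp at ha; linarith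
    have e : (fun w : ℂ => w - a) = fun w => (-a) * (1 - a⁻¹ * w) := by
      ext w; field_simp; ring
    rw [e]
    refine (HasMaj.const s (-a)).mul ?_
    refine ⟨fun w => (1 - a⁻¹ * w) ^ (s:ℂ), maj_aux hs ?_, fun w hw => ?_, fun w hw => ?_⟩
    · rw [norm_inv]; exact inv_le_one_of_one_le₀ ha
    · rw [norm_cpow_pos hs]
    · rw [norm_cpow_pos hs]

lemma HasMaj.poly {s : ℝ} (hs : 0 < s) (F : Polynomial ℂ) : HasMaj s (fun w => F.eval w) := by
  have e : (fun w => F.eval w) = fun w => F.leadingCoeff * (F.roots.map (fun a => w - a)).prod := by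
    ext w; exact (IsAlgClosed.splits F).eval_eq_prod_roots w
  rw [e]
  refine (HasMaj.const s _).mul ?_
  generalize F.roots = m
  induction m using Multiset.induction with
  | empty => simpa using HasMaj.const s 1
  | cons a m ih => simpa using (HasMaj.linear hs a).mul ih

lemma HasMaj.le {s : ℝ} {F : ℂ → ℂ} (hF : HasMaj s F) {z : ℂ} (hz : ‖z‖ < 1) :
    ‖F z‖ ^ s ≤ ∫ θ, PK z θ * ‖F (bpt θ)‖ ^ s ∂arcM := by
  obtain ⟨K, hK, h1, h2⟩ := hF
  refine (h1 z (by simpa using hz)).trans ?_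
  rw [← poisson_formula hK hz]
  refine (norm_integral_le_integral_norm _).trans (le_of_eq ?_)
  congr 1; ext θ
  rw [norm_smul, h2 _ (by simp), Real.norm_of_nonneg (PK_nonneg hz θ)]

/-- Taylor coefficients at the origin. -/
def tc (h : ℂ → ℂ) (n : ℕ) : ℂ := ((n.factorial : ℂ))⁻¹ * iteratedDeriv n h 0

lemma hasSum_tc {h : ℂ → ℂ} (hh : AnalyticOnDisc h) {z : ℂ} (hz : ‖z‖ < 1) :
    HasSum (fun n => tc h n * z ^ n) (h z) := by
  have := Complex.hasSum_taylorSeries_on_ball (f := h) (c := 0) (r := 1) hh (z := z) (by simpa using hz)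
  have e : (fun n => tc h n * z ^ n) =
      fun n : ℕ => ((n.factorial : ℂ))⁻¹ • (z - 0) ^ n • iteratedDeriv n h 0 := by
    ext n
    simp only [tc, smul_eq_mul, sub_zero]; ring
  rw [e]; exact this

lemma summable_norm_tc {h : ℂ → ℂ} (hh : AnalyticOnDisc h) {r : ℝ} (hr0 : 0 ≤ r) (hr : r < 1) :
    Summable (fun n => ‖tc h n‖ * r ^ n) := by
  have := (hasSum_tc hh (z := (r:ℂ)) (by simpa [abs_of_nonneg hr0] using hr)).summable.norm
  simpa [abs_of_nonneg hr0] using this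

lemma norm_mul_bpt {r : ℝ} (hr0 : 0 ≤ r) (θ : ℝ) : ‖(r:ℂ) * bpt θ‖ = r := by
  simp [abs_of_nonneg hr0]

lemma cont_circle {h : ℂ → ℂ} (hh : AnalyticOnDisc h) {r : ℝ} (hr0 : 0 ≤ r) (hr : r < 1) :
    Continuous (fun θ => h ((r:ℂ) * bpt θ)) := by
  have h1 : ContinuousOn h uDisc := hh.continuousOn
  have := continuous_bpt
  refine h1.comp_continuous (by fun_prop) fun θ => ?_
  simp only [uDisc, mem_ball_zero_iff]
  rw [norm_mul_bpt hr0]; exact hr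

/-- Poisson-weighted subharmonicity of powers of the modulus. -/
lemma subharm {h : ℂ → ℂ} (hh : AnalyticOnDisc h) {s r : ℝ} (hs : 0 < s) (hr0 : 0 ≤ r)
    (hr : r < 1) {z : ℂ} (hz : ‖z‖ < 1) :
    ‖h (r * z)‖ ^ s ≤ ∫ θ, PK z θ * ‖h ((r:ℂ) * bpt θ)‖ ^ s ∂arcM := by
  let F : ℕ → Polynomial ℂ := fun N => ∑ n ∈ Finset.range N, Polynomial.C (tc h n * r ^ n) * Polynomial.X ^ n
  have hF : ∀ N w, (F N).eval w = ∑ n ∈ Finset.range N, tc h n * (r * w) ^ n := by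
    intro N w
    simp only [F, Polynomial.eval_finsetSum, Polynomial.eval_mul, Polynomial.eval_C,
      Polynomial.eval_pow, Polynomial.eval_X, mul_pow, mul_assoc]
  have hlim : ∀ w : ℂ, ‖w‖ ≤ 1 → Tendsto (fun N => (F N).eval w) atTop (nhds (h (r * w))) := by
    intro w hw
    simp_rw [hF]
    refine (hasSum_tc hh ?_).tendsto_sum_nat
    rw [norm_mul, Complex.norm_real, Real.norm_of_nonneg hr0]
    nlinarith [norm_nonneg w]
  set B := ∑' n, ‖tc h n‖ * r ^ n
  have hS := summable_norm_tc hh hr0 hr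
  have hB : ∀ N w, ‖w‖ ≤ 1 → ‖(F N).eval w‖ ≤ B := by
    intro N w hw
    rw [hF]
    refine (norm_sum_le _ _).trans ?_
    refine (Finset.sum_le_sum (f := _) (g := fun n => ‖tc h n‖ * r ^ n) fun n _ => ?_).trans
      (hS.sum_le_tsum _ fun n _ => by positivity)
    rw [norm_mul, norm_pow, norm_mul, Complex.norm_real, Real.norm_of_nonneg hr0]
    gcongr
    nlinarith [norm_nonneg w]
  have hle : ∀ N, ‖(F N).eval z‖ ^ s ≤ ∫ θ, PK z θ * ‖(F N).eval (bpt θ)‖ ^ s ∂arcM :=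
    fun N => (HasMaj.poly hs (F N)).le hz
  have hPc := PK_cont hz
  have hbc := continuous_bpt
  refine le_of_tendsto_of_tendsto' (((hlim z hz.le).norm).rpow_const (Or.inr hs.le)) ?_ hle
  refine tendsto_integral_of_dominated_convergence (fun θ => PK z θ * B ^ s) ?_ ?_ ?_ ?_
  · intro N
    refine Continuous.aestronglyMeasurable ?_
    refine hPc.mul (Continuous.rpow_const ?_ fun _ => Or.inr hs.le)
    exact ((F N).continuous.comp hbc).norm
  · exact (integrable_arcM hPc).mul_const _
  · intro N
    refine Eventually.of_forall fun θ => ?_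
    have hp := PK_nonneg hz θ
    rw [Real.norm_of_nonneg (by positivity)]
    gcongr
    exact hB N _ (by simp)
  · refine Eventually.of_forall fun θ => ?_
    exact (((hlim _ (by simp)).norm).rpow_const (Or.inr hs.le)).const_mul _

lemma cont_rpow_circle {h : ℂ → ℂ} (hh : AnalyticOnDisc h) {r s : ℝ} (hs : 0 ≤ s) (hr0 : 0 ≤ r)
    (hr : r < 1) : Continuous (fun θ => ‖h ((r:ℂ) * bpt θ)‖ ^ s) :=
  (cont_circle hh hr0 hr).norm.rpow_const fun _ => Or.inr hs

/-- pointwise growth bound -/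
lemma growth {h : ℂ → ℂ} (hh : AnalyticOnDisc h) {p A : ℝ} (hp : 0 < p)
    (hA : ∀ r ∈ Set.Ioo (0:ℝ) 1, hMean p h r ≤ A) {R : ℝ} (hR0 : 0 < R) (hR : R < 1) :
    ∀ z : ℂ, ‖z‖ ≤ R → ‖h z‖ ≤ ((1 + Real.sqrt R) / (1 - Real.sqrt R) * A) ^ (1 / p) := by
  intro z hz
  set t := Real.sqrt R with ht
  have ht0 : 0 < t := Real.sqrt_pos.2 hR0
  have htt : t * t = R := Real.mul_self_sqrt hR0.le
  have ht1 : t < 1 := by nlinarith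
  have hzt : ‖z / t‖ ≤ t := by
    rw [norm_div, Complex.norm_real, Real.norm_of_nonneg ht0.le, div_le_iff₀ ht0]
    linarith
  have h1 := subharm hh hp ht0.le ht1 (z := z / t) (by linarith)
  have e : (t:ℂ) * (z / t) = z := by
    have : (t:ℂ) ≠ 0 := by exact_mod_cast ht0.ne'
    field_simp
  rw [e] at h1
  have hc := cont_rpow_circle hh (s := p) hp.le ht0.le ht1
  have h2 : ∫ θ, PK (z/t) θ * ‖h ((t:ℂ) * bpt θ)‖ ^ p ∂arcM ≤ (1 + t) / (1 - t) * A := by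
    calc _ ≤ ∫ θ, (1 + t) / (1 - t) * ‖h ((t:ℂ) * bpt θ)‖ ^ p ∂arcM := by
          refine integral_mono (integrable_arcM ((PK_cont (by linarith)).mul hc))
            ((integrable_arcM hc).const_mul _) fun θ => ?_
          have := PK_le (z := z/t) (by linarith) θ
          have h4 : (1 + ‖z/t‖) / (1 - ‖z/t‖) ≤ (1 + t) / (1 - t) := by
            apply div_le_div₀ <;> linarith
          show PK (z/t) θ * _ ≤ (1 + t) / (1 - t) * _
          gcongr
          linarith
      _ = (1 + t) / (1 - t) * hMean p h t := by rw [integral_const_mul]; rfl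
      _ ≤ _ := by
          have : 0 ≤ (1 + t) / (1 - t) := by apply div_nonneg <;> linarith
          gcongr
          exact hA t ⟨ht0, ht1⟩
  have h3 := Real.rpow_le_rpow (by positivity) (h1.trans h2) (z := 1/p) (by positivity)
  rwa [← Real.rpow_mul (norm_nonneg _), mul_one_div_cancel hp.ne', Real.rpow_one] at h3

lemma tangent_pow {a u : ℝ} (ha : 0 ≤ a) (hu : 0 ≤ u) (n : ℕ) :
    a ^ (n + 1) + (n + 1) * a ^ n * (u - a) ≤ u ^ (n + 1) := by
  induction n with
  | zero => simp
  | succ n ih =>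
    have h1 := mul_le_mul_of_nonneg_left ih hu
    have h2 : 0 ≤ ((n:ℝ) + 1) * a ^ n * (u - a) ^ 2 := by positivity
    have e : a ^ (n + 1 + 1) + ((n:ℝ) + 1 + 1) * a ^ (n + 1) * (u - a) +
      ((n:ℝ) + 1) * a ^ n * (u - a) ^ 2 = u * (a ^ (n + 1) + (n + 1) * a ^ n * (u - a)) := by ring
    push_cast
    calc _ ≤ u * (a ^ (n + 1) + (n + 1) * a ^ n * (u - a)) := by linarith
      _ ≤ u * u ^ (n + 1) := h1
      _ = _ := by ring

lemma le_one_add_pow {u : ℝ} (hu : 0 ≤ u) (n : ℕ) : u ≤ 1 + u ^ (n + 1) := by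
  rcases le_total u 1 with h | h
  · have : 0 ≤ u ^ (n+1) := by positivity
    linarith
  · have : u ^ 1 ≤ u ^ (n + 1) := pow_le_pow_right₀ h (by omega)
    simp at this; linarith

lemma PK_cont2 {ρ : ℝ} (hρ0 : 0 ≤ ρ) (hρ : ρ < 1) :
    Continuous (fun x : ℝ × ℝ => PK (ρ * bpt x.1) x.2) := by
  have hb := continuous_bpt
  have e : (fun x : ℝ × ℝ => PK (ρ * bpt x.1) x.2) =
      fun x : ℝ × ℝ => (1 - ‖(ρ:ℂ) * bpt x.1‖ ^ 2) / ‖bpt x.2 - ρ * bpt x.1‖ ^ 2 := by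
    ext x; exact PK_eq _ _
  rw [e]
  have h1 : Continuous fun x : ℝ × ℝ => bpt x.1 := hb.comp continuous_fst
  have h2 : Continuous fun x : ℝ × ℝ => bpt x.2 := hb.comp continuous_snd
  refine Continuous.div (by fun_prop) (by fun_prop) fun x => ?_
  have := bpt_sub_ne (z := ρ * bpt x.1) (by rw [norm_mul_bpt hρ0]; exact hρ) x.2
  positivity

lemma quant {h f ϑ : ℂ → ℂ} (hh : AnalyticOnDisc h) (hf : AnalyticOnDisc f)
    (hϑ : AnalyticOnDisc ϑ) (hfac : ∀ z ∈ uDisc, f z = ϑ z * h z) {s q A : ℝ} (hs : 0 < s) (n : ℕ)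
    (hq : q = s * ((n + 1 : ℕ) : ℝ)) {r ρ : ℝ} (hr0 : 0 < r) (hr : r < 1) (hρ0 : 0 < ρ) (hρ : ρ < 1)
    (hA : hMean q f r ≤ A) (ε L : ℝ)
    (hε : ε = ∫ θ, ‖h ((r:ℂ) * bpt θ)‖ ^ s * |1 - ‖ϑ ((r:ℂ) * bpt θ)‖ ^ s| ∂arcM)
    (hL : L = (1 + ρ) / (1 - ρ)) :
    hMean q h (r * ρ) ≤ A + (n + 1) * (L * ε) * (L * (1 + A) + L * ε) ^ n := by
  have hL0 : 0 ≤ L := by rw [hL]; apply div_nonneg <;> linarith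
  have hε0 : 0 ≤ ε := by rw [hε]; exact integral_nonneg fun θ => by positivity
  set u : ℝ → ℝ := fun θ => ‖f ((r:ℂ) * bpt θ)‖ ^ s with hu
  set v : ℝ → ℝ := fun θ => ‖h ((r:ℂ) * bpt θ)‖ ^ s with hv
  set d : ℝ → ℝ := fun θ => |1 - ‖ϑ ((r:ℂ) * bpt θ)‖ ^ s| with hd
  have cu : Continuous u := cont_rpow_circle hf hs.le hr0.le hr
  have cv : Continuous v := cont_rpow_circle hh hs.le hr0.le hr
  have cd : Continuous d := (continuous_const.sub (cont_rpow_circle hϑ hs.le hr0.le hr)).abs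
  have u0 : ∀ θ, 0 ≤ u θ := fun θ => by positivity
  have v0 : ∀ θ, 0 ≤ v θ := fun θ => by positivity
  have d0 : ∀ θ, 0 ≤ d θ := fun θ => abs_nonneg _
  have hpow : ∀ x : ℝ, 0 ≤ x → (x ^ s) ^ (n + 1) = x ^ q := by
    intro x hx
    rw [hq, Real.rpow_mul_natCast hx]
  have hmq : hMean q f r = ∫ θ, u θ ^ (n+1) ∂arcM := by
    unfold hMean; congr 1; ext θ; rw [hu]; simp only []; rw [hpow _ (norm_nonneg _)]
  have huv : ∀ θ, v θ ≤ u θ + v θ * d θ := by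
    intro θ
    have e : u θ = ‖ϑ ((r:ℂ) * bpt θ)‖ ^ s * v θ := by
      simp only [hu, hv]
      rw [hfac _ (by simp only [uDisc, mem_ball_zero_iff]; rw [norm_mul_bpt hr0.le]; exact hr), norm_mul,
        Real.mul_rpow (norm_nonneg _) (norm_nonneg _)]
    have h1 := le_abs_self (1 - ‖ϑ ((r:ℂ) * bpt θ)‖ ^ s)
    have h2 : (1 - ‖ϑ ((r:ℂ) * bpt θ)‖ ^ s) ≤ d θ := h1
    have := mul_le_mul_of_nonneg_left h2 (v0 θ)
    rw [e]; linarith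
  set k : ℝ → ℝ → ℝ := fun t θ => PK (ρ * bpt t) θ with hk
  have hz : ∀ t, ‖(ρ:ℂ) * bpt t‖ < 1 := fun t => by rw [norm_mul_bpt hρ0.le]; exact hρ
  have k0 : ∀ t θ, 0 ≤ k t θ := fun t θ => PK_nonneg (hz t) θ
  have kL : ∀ t θ, k t θ ≤ L := fun t θ => by
    have := PK_le (hz t) θ
    rwa [norm_mul_bpt hρ0.le, ← hL] at this
  have kc : ∀ t, Continuous (k t) := fun t => PK_cont (hz t)
  set a : ℝ → ℝ := fun t => ∫ θ, k t θ * u θ ∂arcM with ha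
  have a0 : ∀ t, 0 ≤ a t := fun t => integral_nonneg fun θ => mul_nonneg (k0 t θ) (u0 θ)
  have aL : ∀ t, a t ≤ L * (1 + A) := by
    intro t
    calc a t ≤ ∫ θ, L * (1 + u θ ^ (n+1)) ∂arcM := by
          refine integral_mono (integrable_arcM ((kc t).mul cu)) (integrable_arcM (by fun_prop)) ?_
          intro θ
          exact mul_le_mul (kL t θ) (le_one_add_pow (u0 θ) n) (u0 θ) hL0
      _ = L * (1 + hMean q f r) := by
          rw [integral_const_mul, integral_add (integrable_const _) (integrable_arcM (by fun_prop)), hmq]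
          simp
      _ ≤ _ := by gcongr
  have hx : ∀ t, ‖h (((r * ρ : ℝ) : ℂ) * bpt t)‖ ^ s ≤ a t + L * ε := by
    intro t
    have h1 := subharm hh hs hr0.le hr (hz t)
    have e : ((r * ρ : ℝ) : ℂ) * bpt t = r * (ρ * bpt t) := by push_cast; ring
    rw [e]
    refine h1.trans ?_
    calc _ ≤ ∫ θ, (k t θ * u θ + L * (v θ * d θ)) ∂arcM := by
          refine integral_mono (integrable_arcM ((kc t).mul cv)) (integrable_arcM ?_) ?_
          · have := kc t; fun_prop
          intro θ
          show k t θ * v θ ≤ k t θ * u θ + L * (v θ * d θ)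
          have h2 := mul_le_mul_of_nonneg_left (huv θ) (k0 t θ)
          have h3 := mul_le_mul_of_nonneg_right (kL t θ) (mul_nonneg (v0 θ) (d0 θ))
          linarith
      _ = _ := by
          have i1 : Integrable (fun θ => k t θ * u θ) arcM := integrable_arcM ((kc t).mul cu)
          rw [integral_add i1 (integrable_arcM (by fun_prop)), integral_const_mul, hε]
  have jensen : ∀ t, a t ^ (n+1) ≤ ∫ θ, k t θ * u θ ^ (n+1) ∂arcM := by
    intro t
    have h1 : ∀ θ, k t θ * (a t ^ (n + 1) - (n+1) * a t ^ n * a t) + (n+1) * a t ^ n * (k t θ * u θ)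
        ≤ k t θ * u θ ^ (n+1) := by
      intro θ
      have := mul_le_mul_of_nonneg_left (tangent_pow (a0 t) (u0 θ) n) (k0 t θ)
      linarith
    have h2 := integral_mono (μ := arcM) (integrable_arcM ?_) (integrable_arcM ?_) h1
    · rw [integral_add, integral_mul_const, integral_const_mul] at h2
      · have e1 : ∫ θ, k t θ ∂arcM = 1 := PK_int (hz t)
        rw [e1] at h2
        change 1 * _ + (n+1) * a t ^ n * a t ≤ _ at h2
        linarith
      · have := kc t; exact integrable_arcM (by fun_prop)
      · have := kc t; exact integrable_arcM (by fun_prop)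
    · have := kc t; fun_prop
    · have := kc t; fun_prop
  have hpt : ∀ t, ‖h (((r * ρ : ℝ) : ℂ) * bpt t)‖ ^ q ≤ (∫ θ, k t θ * u θ ^ (n+1) ∂arcM) +
      (n + 1) * (L * ε) * (L * (1 + A) + L * ε) ^ n := by
    intro t
    have hδ : 0 ≤ L * ε := mul_nonneg hL0 hε0
    rw [← hpow _ (norm_nonneg _)]
    have h1 : (‖h (((r * ρ : ℝ) : ℂ) * bpt t)‖ ^ s) ^ (n+1) ≤ (a t + L * ε) ^ (n+1) :=
      pow_le_pow_left₀ (by positivity) (hx t) _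
    have h2 := tangent_pow (a := a t + L * ε) (u := a t) (add_nonneg (a0 t) hδ) (a0 t) n
    have h3 : (a t + L * ε) ^ n ≤ (L * (1 + A) + L * ε) ^ n :=
      pow_le_pow_left₀ (add_nonneg (a0 t) hδ) (by linarith [aL t]) _
    have h4 : (n + 1) * (L * ε) * (a t + L * ε) ^ n ≤ (n + 1) * (L * ε) * (L * (1 + A) + L * ε) ^ n :=
      mul_le_mul_of_nonneg_left h3 (by positivity)
    have := jensen t
    linarith
  have hint : Integrable (Function.uncurry fun t θ => k t θ * u θ ^ (n+1)) (arcM.prod arcM) := by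
    have h1 : Integrable (fun x : ℝ × ℝ => u x.2 ^ (n+1)) (arcM.prod arcM) :=
      (integrable_arcM (cu.pow (n+1))).comp_snd arcM
    refine h1.bdd_mul (c := L) (PK_cont2 hρ0.le hρ).aestronglyMeasurable ?_
    refine Eventually.of_forall fun x => ?_
    have := kL x.1 x.2
    have h0 := k0 x.1 x.2
    rw [Real.norm_of_nonneg]
    · exact this
    · exact h0
  have hfub : ∫ t, ∫ θ, k t θ * u θ ^ (n+1) ∂arcM ∂arcM = hMean q f r := by
    rw [integral_integral_swap hint, hmq]
    congr 1; ext θ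
    rw [integral_mul_const]
    have : ∫ t, k t θ ∂arcM = 1 := by
      simp only [hk, PK_symm ρ _ θ]
      exact PK_int (hz θ)
    rw [this, one_mul]
  have hq0 : 0 ≤ q := by rw [hq]; positivity
  have hrρ : r * ρ < 1 := by nlinarith
  calc hMean q h (r * ρ) ≤ ∫ t, ((∫ θ, k t θ * u θ ^ (n+1) ∂arcM) +
      (n + 1) * (L * ε) * (L * (1 + A) + L * ε) ^ n) ∂arcM := by
        refine integral_mono (integrable_arcM (cont_rpow_circle hh hq0 (by positivity) hrρ)) ?_ hpt
        exact hint.integral_prod_left.add (integrable_const _)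
    _ = hMean q f r + (n + 1) * (L * ε) * (L * (1 + A) + L * ε) ^ n := by
        have i1 : Integrable (fun t => ∫ θ, k t θ * u θ ^ (n+1) ∂arcM) arcM :=
          hint.integral_prod_left
        rw [integral_add i1 (integrable_const _), integral_const]
        simp only [probReal_univ, one_smul]
        rw [← hfub]
    _ ≤ _ := by linarith

lemma err_tendsto {h ϑ : ℂ → ℂ} (hh : AnalyticOnDisc h) (hϑ : IsInner ϑ) {p s H : ℝ} (hs : 0 < s)
    (hsp : 2 * s ≤ p) (hH : ∀ r ∈ Set.Ioo (0:ℝ) 1, hMean p h r ≤ H) :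
    Tendsto (fun r : ℝ => ∫ θ, ‖h ((r:ℂ) * bpt θ)‖ ^ s * |1 - ‖ϑ ((r:ℂ) * bpt θ)‖ ^ s| ∂arcM)
      (nhdsWithin 1 (Set.Iio 1)) (nhds 0) := by
  obtain ⟨⟨hϑa, C, hC⟩, Θ, hΘ, hΘ1⟩ := hϑ
  have hev : ∀ᶠ r : ℝ in nhdsWithin 1 (Set.Iio 1), r ∈ Set.Ioo (0:ℝ) 1 :=
    Ioo_mem_nhdsLT (by norm_num)
  have hd2 : Tendsto (fun r : ℝ => ∫ θ, |1 - ‖ϑ ((r:ℂ) * bpt θ)‖ ^ s| ^ 2 ∂arcM)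
      (nhdsWithin 1 (Set.Iio 1)) (nhds (∫ θ, 0 ∂arcM)) := by
    refine tendsto_integral_filter_of_dominated_convergence (fun _ => (1 + C ^ s) ^ 2) ?_ ?_ ?_ ?_
    · filter_upwards [hev] with r hr
      exact ((continuous_const.sub (cont_rpow_circle hϑa hs.le hr.1.le hr.2)).abs.pow 2).aestronglyMeasurable
    · filter_upwards [hev] with r hr
      refine Eventually.of_forall fun θ => ?_
      have h1 : ‖ϑ ((r:ℂ) * bpt θ)‖ ≤ C := hC _ (by
        simp only [uDisc, mem_ball_zero_iff]; rw [norm_mul_bpt hr.1.le]; exact hr.2)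
      have h2 : ‖ϑ ((r:ℂ) * bpt θ)‖ ^ s ≤ C ^ s := Real.rpow_le_rpow (norm_nonneg _) h1 hs.le
      have h3 : 0 ≤ ‖ϑ ((r:ℂ) * bpt θ)‖ ^ s := by positivity
      rw [Real.norm_of_nonneg (by positivity)]
      gcongr
      rw [abs_le]; constructor <;> linarith
    · exact integrable_const _
    · filter_upwards [hΘ, hΘ1] with θ h1 h2
      have h3 := (((h1.norm.rpow_const (p := s) (Or.inr hs.le)).const_sub 1).abs).pow 2
      simpa [h2] using h3
  simp only [integral_zero] at hd2
  have hH0 : 0 ≤ H := le_trans (integral_nonneg fun θ => by positivity) (hH (1/2) (by norm_num))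
  refine squeeze_zero_norm' (a := fun r : ℝ =>
    Real.sqrt (1 + H) * Real.sqrt (∫ θ, |1 - ‖ϑ ((r:ℂ) * bpt θ)‖ ^ s| ^ 2 ∂arcM)) ?_ ?_
  · filter_upwards [hev] with r hr
    have cv := cont_rpow_circle hh (s := s) hs.le hr.1.le hr.2
    have cp := cont_rpow_circle hh (s := p) (by linarith) hr.1.le hr.2
    have cd := (continuous_const (y := (1:ℝ))).sub (cont_rpow_circle hϑa hs.le hr.1.le hr.2) |>.abs
    set v : ℝ → ℝ := fun θ => ‖h ((r:ℂ) * bpt θ)‖ ^ s with hv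
    set d : ℝ → ℝ := fun θ => |1 - ‖ϑ ((r:ℂ) * bpt θ)‖ ^ s| with hd
    have v0 : ∀ θ, 0 ≤ v θ := fun θ => by positivity
    have d0 : ∀ θ, 0 ≤ d θ := fun θ => abs_nonneg _
    rw [Real.norm_of_nonneg (integral_nonneg fun θ => mul_nonneg (v0 θ) (d0 θ))]
    have hI : ∫ θ, v θ ^ 2 ∂arcM ≤ 1 + H := by
      calc _ ≤ ∫ θ, (1 + ‖h ((r:ℂ) * bpt θ)‖ ^ p) ∂arcM := by
            refine integral_mono (integrable_arcM (by fun_prop)) (integrable_arcM (by fun_prop)) ?_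
            intro θ
            simp only [hv]
            rw [← Real.rpow_mul_natCast (norm_nonneg _)]
            rcases le_total ‖h ((r:ℂ) * bpt θ)‖ 1 with h1 | h1
            · have := Real.rpow_le_one (norm_nonneg _) h1 (z := s * (2:ℕ)) (by positivity)
              have h3 : 0 ≤ ‖h ((r:ℂ) * bpt θ)‖ ^ p := by positivity
              linarith
            · have := Real.rpow_le_rpow_of_exponent_le h1 (y := s * (2:ℕ)) (z := p) (by push_cast; linarith)
              linarith
        _ = 1 + hMean p h r := by
            rw [integral_add (integrable_const _) (integrable_arcM cp)]; simp [hMean]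
        _ ≤ _ := by linarith [hH r hr]
    set I := ∫ θ, v θ ^ 2 ∂arcM
    set J := ∫ θ, d θ ^ 2 ∂arcM
    set E := ∫ θ, v θ * d θ ∂arcM
    have hI0 : 0 ≤ I := integral_nonneg fun θ => by positivity
    have hJ0 : 0 ≤ J := integral_nonneg fun θ => by positivity
    have hq : ∀ x : ℝ, 0 ≤ J * (x * x) + (-2 * E) * x + I := by
      intro x
      have h0 : 0 ≤ ∫ θ, (v θ - x * d θ) ^ 2 ∂arcM := integral_nonneg fun θ => by positivity
      have e : ∫ θ, (v θ - x * d θ) ^ 2 ∂arcM = I + ((-2 * x) * E + (x * x) * J) := by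
        rw [← integral_const_mul, ← integral_const_mul, ← integral_add, ← integral_add]
        · congr 1; ext θ; ring
        all_goals exact integrable_arcM (by fun_prop)
      rw [e] at h0; linarith
    have hdisc := discrim_le_zero hq
    have hE : E ^ 2 ≤ I * J := by unfold discrim at hdisc; nlinarith
    rw [← Real.sqrt_mul (by linarith)]
    refine Real.le_sqrt_of_sq_le (hE.trans ?_)
    gcongr
  · have := (hd2.sqrt).const_mul (Real.sqrt (1 + H))
    simpa using this

/-- division by an inner function in Hardy spaces -/
lemma inner_div {h f ϑ : ℂ → ℂ} (hϑ : IsInner ϑ) {p q A : ℝ} (hp : 0 < p) (hq : 0 < q)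
    (hh : MemHp p h) (hf : AnalyticOnDisc f) (hfac : ∀ z ∈ uDisc, f z = ϑ z * h z)
    (hA : ∀ r ∈ Set.Ioo (0:ℝ) 1, hMean q f r ≤ A) :
    ∀ r ∈ Set.Ioo (0:ℝ) 1, hMean q h r ≤ A := by
  intro ρ' hρ'
  obtain ⟨hha, H, hH⟩ := hh
  obtain ⟨n, hn⟩ := exists_nat_gt (2 * q / p)
  set s := q / ((n + 1 : ℕ) : ℝ) with hs
  have hn1 : (0:ℝ) < ((n + 1 : ℕ) : ℝ) := by positivity
  have hs0 : 0 < s := by positivity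
  have hsp : 2 * s ≤ p := by
    rw [div_lt_iff₀ hp] at hn
    rw [hs, ← mul_div_assoc, div_le_iff₀ hn1]
    push_cast
    linarith
  have hqs : q = s * ((n + 1 : ℕ) : ℝ) := by rw [hs]; field_simp
  have hH' : ∀ r ∈ Set.Ioo (0:ℝ) 1, hMean p h r ≤ H := fun r hr => hH ⟨r, hr, rfl⟩
  have herr := err_tendsto hha hϑ hs0 hsp hH'
  set ε : ℝ → ℝ := fun r : ℝ => ∫ θ, ‖h ((r:ℂ) * bpt θ)‖ ^ s * |1 - ‖ϑ ((r:ℂ) * bpt θ)‖ ^ s| ∂arcM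
    with hε
  have hid : Tendsto (fun r : ℝ => r) (nhdsWithin 1 (Set.Iio 1)) (nhds 1) := tendsto_nhdsWithin_of_tendsto_nhds tendsto_id
  have hLt : Tendsto (fun r : ℝ => (1 + ρ' / r) / (1 - ρ' / r)) (nhdsWithin 1 (Set.Iio 1))
      (nhds ((1 + ρ' / 1) / (1 - ρ' / 1))) := by
    have h1 : Tendsto (fun r : ℝ => ρ' / r) (nhdsWithin 1 (Set.Iio 1)) (nhds (ρ' / 1)) :=
      tendsto_const_nhds.div hid one_ne_zero
    refine (h1.const_add 1).div (h1.const_sub 1) ?_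
    have := hρ'.2
    simp only [div_one]; linarith
  set L : ℝ → ℝ := fun r => (1 + ρ' / r) / (1 - ρ' / r) with hL
  have hLε := hLt.mul herr
  rw [mul_zero] at hLε
  have hlim : Tendsto (fun r => A + (n + 1) * (L r * ε r) * (L r * (1 + A) + L r * ε r) ^ n)
      (nhdsWithin 1 (Set.Iio 1)) (nhds (A + (n + 1) * 0 *
        ((1 + ρ' / 1) / (1 - ρ' / 1) * (1 + A) + 0) ^ n)) :=
    ((hLε.const_mul _).mul (((hLt.mul_const _).add hLε).pow n)).const_add A
  simp only [mul_zero, zero_mul, add_zero] at hlim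
  refine ge_of_tendsto hlim ?_
  have hev : ∀ᶠ r : ℝ in nhdsWithin 1 (Set.Iio 1), r ∈ Set.Ioo ρ' 1 :=
    Ioo_mem_nhdsLT hρ'.2
  filter_upwards [hev] with r hr
  have hr0 : 0 < r := hρ'.1.trans hr.1
  have h1 : ρ' / r < 1 := (div_lt_one hr0).2 hr.1
  have := quant hha hf hϑ.1.1 hfac hs0 n hqs hr0 hr.2 (div_pos hρ'.1 hr0) h1 (hA r ⟨hr0, hr.2⟩)
    (ε r) (L r) rfl rfl
  rwa [mul_div_cancel₀ _ hr0.ne'] at this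

lemma banach_alaoglu_ultra {X : Type*} [NormedAddCommGroup X] [NormedSpace ℂ X]
    (R : ℝ) (U : Ultrafilter (X →L[ℂ] ℂ)) (h : ∀ᶠ Λ in (U : Filter (X →L[ℂ] ℂ)), ‖Λ‖ ≤ R) :
    ∃ Λ0 : X →L[ℂ] ℂ, ‖Λ0‖ ≤ R ∧ ∀ x, Tendsto (fun Λ : X →L[ℂ] ℂ => Λ x) U (nhds (Λ0 x)) := by
  have hc := WeakDual.isCompact_closedBall (𝕜 := ℂ) (E := X) 0 R
  rw [isCompact_iff_ultrafilter_le_nhds] at hc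
  obtain ⟨a, ha, hle⟩ := hc (U.map (StrongDual.toWeakDual)) (by
    rw [Filter.le_principal_iff]
    show ∀ᶠ Λ in (U : Filter (X →L[ℂ] ℂ)), _
    filter_upwards [h] with Λ hΛ
    show Λ ∈ closedBall (0 : X →L[ℂ] ℂ) R
    simpa using hΛ)
  refine ⟨WeakDual.toStrongDual a, by simpa using ha, fun x => ?_⟩
  have h1 : Tendsto (fun Λ : X →L[ℂ] ℂ => (StrongDual.toWeakDual Λ)) U (nhds a) := hle
  rw [tendsto_iff_forall_eval_tendsto_topDualPairing] at h1
  exact h1 x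

lemma ks_step {X : Type*} [NormedAddCommGroup X] [NormedSpace ℂ X]
    (N : Set (X →L[ℂ] ℂ))
    (hN : ∀ R : ℝ, ∀ U : Ultrafilter (X →L[ℂ] ℂ),
      (∀ᶠ Λ in (U : Filter (X →L[ℂ] ℂ)), Λ ∈ N ∧ ‖Λ‖ ≤ R) →
      ∀ Λ0 : X →L[ℂ] ℂ, (∀ x, Tendsto (fun Λ : X →L[ℂ] ℂ => Λ x) U (nhds (Λ0 x))) → Λ0 ∈ N)
    (r : ℝ) (hr : 0 < r) (G : Set X)
    (hG : ∀ Λ ∈ N, ‖Λ‖ ≤ r → ∃ x ∈ G, 1 < ‖Λ x‖) :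
    ∃ F : Finset X, (∀ x ∈ F, ‖x‖ ≤ 1 / r) ∧
      ∀ Λ ∈ N, ‖Λ‖ ≤ r + 1 → ∃ x ∈ G ∪ (F : Set X), 1 < ‖Λ x‖ := by
  classical
  by_contra hcon
  push Not at hcon
  have key : ∀ F : Finset {x : X // ‖x‖ ≤ 1 / r}, ∃ Λ ∈ N, ‖Λ‖ ≤ r + 1 ∧
      (∀ x ∈ G, ‖Λ x‖ ≤ 1) ∧ ∀ x ∈ F, ‖Λ (x : X)‖ ≤ 1 := by
    intro F
    obtain ⟨Λ, h1, h2, h3⟩ := hcon (F.image Subtype.val) (by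
      intro x hx
      simp only [Finset.mem_image] at hx
      obtain ⟨y, _, rfl⟩ := hx
      exact y.2)
    refine ⟨Λ, h1, h2, fun x hx => h3 x (Or.inl hx), fun x hx => h3 x (Or.inr ?_)⟩
    simp only [Finset.coe_image]
    exact ⟨x, hx, rfl⟩
  choose L hL1 hL2 hL3 hL4 using key
  let V : Ultrafilter (Finset {x : X // ‖x‖ ≤ 1 / r}) := Ultrafilter.of atTop
  have hV : (V : Filter (Finset {x : X // ‖x‖ ≤ 1 / r})) ≤ atTop := Ultrafilter.of_le _
  let U := V.map L
  have hU : ∀ᶠ Λ in (U : Filter (X →L[ℂ] ℂ)), Λ ∈ N ∧ ‖Λ‖ ≤ r + 1 := by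
    show ∀ᶠ F in (V : Filter _), L F ∈ N ∧ ‖L F‖ ≤ r + 1
    exact Eventually.of_forall fun F => ⟨hL1 F, hL2 F⟩
  obtain ⟨Λ0, -, hΛ0⟩ := banach_alaoglu_ultra (r + 1) U (hU.mono fun _ h => h.2)
  have hmem := hN _ U hU Λ0 hΛ0
  have hb : ∀ x, ‖x‖ ≤ 1 / r → ‖Λ0 x‖ ≤ 1 := by
    intro x hx
    refine le_of_tendsto (hΛ0 x).norm ?_
    show ∀ᶠ F in (V : Filter _), ‖L F x‖ ≤ 1
    have := hV (Filter.eventually_ge_atTop ({⟨x, hx⟩} : Finset {x : X // ‖x‖ ≤ 1 / r}))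
    filter_upwards [this] with F hF
    exact hL4 F ⟨x, hx⟩ (by simpa using hF)
  have hnorm : ‖Λ0‖ ≤ r := by
    refine Λ0.opNorm_le_bound hr.le fun x => ?_
    rcases eq_or_ne x 0 with rfl | hx0
    · simp
    have hxp : 0 < ‖x‖ := norm_pos_iff.2 hx0
    have h1 := hb (((1 / (r * ‖x‖) : ℝ) : ℂ) • x) (by
      rw [norm_smul, Complex.norm_real, Real.norm_of_nonneg (by positivity)]
      apply le_of_eq; field_simp)
    rw [map_smul, norm_smul, Complex.norm_real, Real.norm_of_nonneg (by positivity),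
      one_div, inv_mul_le_iff₀ (by positivity)] at h1
    simpa using h1
  obtain ⟨x, hx, hx1⟩ := hG Λ0 hmem hnorm
  refine absurd hx1 (not_lt.2 (le_of_tendsto (hΛ0 x).norm ?_))
  show ∀ᶠ F in (V : Filter _), ‖L F x‖ ≤ 1
  exact Eventually.of_forall fun F => hL3 F x hx

lemma ks_null {X : Type*} [NormedAddCommGroup X] [NormedSpace ℂ X]
    (N : Set (X →L[ℂ] ℂ))
    (hN : ∀ R : ℝ, ∀ U : Ultrafilter (X →L[ℂ] ℂ),
      (∀ᶠ Λ in (U : Filter (X →L[ℂ] ℂ)), Λ ∈ N ∧ ‖Λ‖ ≤ R) →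
      ∀ Λ0 : X →L[ℂ] ℂ, (∀ x, Tendsto (fun Λ : X →L[ℂ] ℂ => Λ x) U (nhds (Λ0 x))) → Λ0 ∈ N)
    (h1 : ∀ Λ ∈ N, 1 < ‖Λ‖) :
    ∃ S : Set X, (∀ ε > (0 : ℝ), {x ∈ S | ε ≤ ‖x‖}.Finite) ∧ ∀ Λ ∈ N, ∃ x ∈ S, 1 < ‖Λ x‖ := by
  classical
  have step : ∀ (n : ℕ) (G : Set X), ∃ F : Finset X,
      (∀ Λ ∈ N, ‖Λ‖ ≤ (n : ℝ) + 1 → ∃ x ∈ G, 1 < ‖Λ x‖) →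
      (∀ x ∈ F, ‖x‖ ≤ 1 / ((n : ℝ) + 1)) ∧
      ∀ Λ ∈ N, ‖Λ‖ ≤ (n : ℝ) + 1 + 1 → ∃ x ∈ G ∪ (F : Set X), 1 < ‖Λ x‖ := by
    intro n G
    by_cases hG : (∀ Λ ∈ N, ‖Λ‖ ≤ (n : ℝ) + 1 → ∃ x ∈ G, 1 < ‖Λ x‖)
    · obtain ⟨F, hF⟩ := ks_step N hN ((n : ℝ) + 1) (by positivity) G hG
      exact ⟨F, fun _ => hF⟩
    · exact ⟨∅, fun h => absurd h hG⟩
  choose Fs hFs using step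
  let G : ℕ → Set X := fun n => Nat.rec ∅ (fun k g => g ∪ (Fs k g : Set X)) n
  have hG0 : G 0 = ∅ := rfl
  have hGs : ∀ n, G (n + 1) = G n ∪ (Fs n (G n) : Set X) := fun n => rfl
  have hP : ∀ n : ℕ, ∀ Λ ∈ N, ‖Λ‖ ≤ (n : ℝ) + 1 → ∃ x ∈ G n, 1 < ‖Λ x‖ := by
    intro n
    induction n with
    | zero => intro Λ hΛ h; exact absurd (h1 Λ hΛ) (by simpa using h)
    | succ k ih =>
      intro Λ hΛ h
      rw [hGs]
      exact (hFs k (G k) ih).2 Λ hΛ (by push_cast at h; exact h)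
  refine ⟨⋃ n, (Fs n (G n) : Set X), ?_, ?_⟩
  · intro ε hε
    obtain ⟨m, hm⟩ := exists_nat_gt (1 / ε)
    refine Set.Finite.subset (s := ⋃ n ∈ Set.Iio m, (Fs n (G n) : Set X)) ?_ ?_
    · exact (Set.finite_Iio m).biUnion fun n _ => Finset.finite_toSet _
    · rintro x ⟨hx, hxε⟩
      simp only [mem_iUnion] at hx ⊢
      obtain ⟨n, hn⟩ := hx
      refine ⟨n, ?_, hn⟩
      have h2 := (hFs n (G n) (hP n)).1 x hn
      by_contra hnm
      simp only [mem_Iio, not_lt] at hnm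
      have h3 : (m : ℝ) ≤ n := by exact_mod_cast hnm
      have h4 : ε ≤ 1 / ((n : ℝ) + 1) := hxε.trans h2
      have h5 : 1 / ((n : ℝ) + 1) < ε := by
        rw [div_lt_comm₀ (by positivity) hε]; linarith
      linarith
  · intro Λ hΛ
    obtain ⟨n, hn⟩ := exists_nat_gt ‖Λ‖
    obtain ⟨x, hx, hx1⟩ := hP n Λ hΛ (by linarith)
    refine ⟨x, ?_, hx1⟩
    have : ∀ n, G n ⊆ ⋃ n, (Fs n (G n) : Set X) := by
      intro n
      induction n with
      | zero => simp [hG0]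
      | succ k ih =>
        rw [hGs]
        exact union_subset ih (subset_iUnion (fun n => (Fs n (G n) : Set X)) k)
    exact this n hx

lemma sep_submodule {E : Type*} [NormedAddCommGroup E] [NormedSpace ℂ E]
    (P : Submodule ℂ E) (v : E) (hv : ∀ m ∈ P, 1 ≤ ‖v - m‖) :
    ∃ φ : E →L[ℂ] ℂ, (∀ m ∈ P, φ m = 0) ∧ φ v ≠ 0 := by
  let _ : NormedSpace ℝ E := NormedSpace.restrictScalars ℝ ℂ E
  have _ : IsScalarTower ℝ ℂ E := RestrictScalars.isScalarTower ℝ ℂ E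
  have hnot : v ∉ closure (P : Set E) := by
    intro h
    obtain ⟨m, hm, hd⟩ := Metric.mem_closure_iff.1 h 1 one_pos
    rw [dist_eq_norm] at hd
    exact absurd (hv m hm) (not_le.2 hd)
  have hconv : Convex ℝ (closure (P : Set E)) :=
    (P.restrictScalars ℝ).convex.closure
  obtain ⟨f, u, h1, h2⟩ := RCLike.geometric_hahn_banach_closed_point (𝕜 := ℂ) hconv isClosed_closure hnot
  have hu : 0 < u := by simpa using h1 0 (subset_closure P.zero_mem)
  refine ⟨f, fun m hm => ?_, fun h => ?_⟩
  · by_contra hne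
    have hpos : 0 < ‖f m‖ ^ 2 := by positivity
    have := h1 ((((u / ‖f m‖ ^ 2 : ℝ) : ℂ) * (starRingEnd ℂ) (f m)) • m)
      (subset_closure (P.smul_mem _ hm))
    rw [map_smul, smul_eq_mul, mul_assoc, mul_comm ((starRingEnd ℂ) (f m)), Complex.mul_conj,
      Complex.normSq_eq_norm_sq, ← Complex.ofReal_mul, div_mul_cancel₀ _ hpos.ne'] at this
    simp at this
  · rw [h] at h2
    simp at h2; linarith

/-- Evaluation of functionals on a set of vectors tending to zero. -/
def evalLp {X : Type*} [NormedAddCommGroup X] [NormedSpace ℂ X] (S : Set X) (B : ℝ)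
    (hB : ∀ x ∈ S, ‖x‖ ≤ B) : (X →L[ℂ] ℂ) →ₗ[ℂ] lp (fun _ : S => ℂ) ⊤ where
  toFun Λ := ⟨fun x => Λ (x : X), by
    apply memℓp_infty
    refine ⟨‖Λ‖ * B, ?_⟩
    rintro _ ⟨x, rfl⟩
    exact (Λ.le_opNorm _).trans (mul_le_mul_of_nonneg_left (hB _ x.2) (norm_nonneg _))⟩
  map_add' Λ Λ' := by ext x; rfl
  map_smul' c Λ := by ext x; rfl

lemma ks_rep {X : Type*} [NormedAddCommGroup X] [NormedSpace ℂ X] [CompleteSpace X]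
    (M : Submodule ℂ (X →L[ℂ] ℂ)) (Λ1 : X →L[ℂ] ℂ) (S : Set X)
    (hS : ∀ ε > (0 : ℝ), {x ∈ S | ε ≤ ‖x‖}.Finite)
    (hM : ∀ m ∈ M, ∃ x ∈ S, 1 < ‖(Λ1 - m) x‖) :
    ∃ x : X, (∀ m ∈ M, m x = 0) ∧ Λ1 x ≠ 0 := by
  classical
  obtain ⟨B, hB⟩ : ∃ B : ℝ, ∀ x ∈ S, ‖x‖ ≤ B := by
    obtain ⟨B, hB⟩ := ((hS 1 one_pos).image norm).bddAbove
    refine ⟨max B 1, fun x hx => ?_⟩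
    rcases le_total 1 ‖x‖ with h | h
    · exact (hB ⟨x, ⟨hx, h⟩, rfl⟩).trans (le_max_left _ _)
    · exact h.trans (le_max_right _ _)
  let V := evalLp S B hB
  have hVapp : ∀ Λ (x : S), V Λ x = Λ (x : X) := fun _ _ => rfl
  obtain ⟨φ, hφ0, hφ1⟩ := sep_submodule (M.map V) (V Λ1) (by
    rintro _ ⟨m, hm, rfl⟩
    obtain ⟨x, hx, h1⟩ := hM m hm
    rw [← map_sub]
    refine h1.le.trans ?_
    have := lp.norm_apply_le_norm ENNReal.top_ne_zero (V (Λ1 - m)) ⟨x, hx⟩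
    rwa [hVapp] at this)
  let α : S → ℂ := fun s => φ (lp.single ⊤ s (1 : ℂ))
  have hsingle : ∀ (s : S) (c : ℂ), φ (lp.single ⊤ s c) = c * α s := by
    intro s c
    have : (lp.single ⊤ s c : lp (fun _ : S => ℂ) ⊤) = c • lp.single ⊤ s (1 : ℂ) := by
      rw [← lp.single_smul]; simp
    rw [this, map_smul, smul_eq_mul]
  have hαsum : Summable (fun s => ‖α s‖) := by
    refine summable_of_sum_le (c := ‖φ‖) (fun _ => norm_nonneg _) ?_
    intro F
    let c : S → ℂ := fun s => (starRingEnd ℂ) (α s) / ‖α s‖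
    have hc : ∀ s, ‖c s‖ ≤ 1 := by
      intro s
      simp only [c, norm_div, RCLike.norm_conj, Complex.norm_real, norm_norm]
      exact div_self_le_one _
    let w : lp (fun _ : S => ℂ) ⊤ := ∑ s ∈ F, lp.single ⊤ s (c s)
    have hw : ‖w‖ ≤ 1 := by
      refine lp.norm_le_of_forall_le zero_le_one fun t => ?_
      have : w t = if t ∈ F then c t else 0 := by
        simp only [w]
        rw [lp.coeFn_sum]
        simp [Finset.sum_apply, lp.single_apply, Pi.single_apply]
      rw [this]
      split_ifs
      · exact hc t
      · simp
    have h1 : φ w = ((∑ s ∈ F, ‖α s‖ : ℝ) : ℂ) := by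
      simp only [w, map_sum, hsingle, Complex.ofReal_sum]
      refine Finset.sum_congr rfl fun s _ => ?_
      simp only [c]
      rcases eq_or_ne (α s) 0 with h | h
      · simp [h]
      · have : (‖α s‖ : ℂ) ≠ 0 := by simpa using h
        field_simp
        rw [mul_comm, Complex.mul_conj, Complex.normSq_eq_norm_sq]; push_cast; ring
    have h2 := φ.le_opNorm w
    rw [h1, Complex.norm_real, Real.norm_of_nonneg (Finset.sum_nonneg fun _ _ => norm_nonneg _)] at h2
    exact h2.trans (mul_le_of_le_one_right (norm_nonneg _) hw)
  have hxsum : Summable (fun s : S => α s • (s : X)) := by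
    refine Summable.of_norm_bounded (g := fun s => ‖α s‖ * B) (hαsum.mul_right _) fun s => ?_
    rw [norm_smul]
    exact mul_le_mul_of_nonneg_left (hB _ s.2) (norm_nonneg _)
  have hrep : ∀ Λ : X →L[ℂ] ℂ, φ (V Λ) = Λ (∑' s : S, α s • (s : X)) := by
    intro Λ
    have h1 : HasSum (fun s : S => Λ (α s • (s : X))) (Λ (∑' s : S, α s • (s : X))) :=
      hxsum.hasSum.mapL Λ
    have h2 : HasSum (fun s : S => (lp.single ⊤ s (Λ (s : X)) : lp (fun _ : S => ℂ) ⊤)) (V Λ) := by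
      rw [HasSum, SummationFilter.unconditional_filter, Metric.tendsto_atTop]
      intro ε hε
      have hfin := hS (ε / 2 / (‖Λ‖ + 1)) (by positivity)
      have hfin2 : {s : S | ε / 2 / (‖Λ‖ + 1) ≤ ‖(s : X)‖}.Finite := by
        refine Set.Finite.of_finite_image (f := Subtype.val) (hfin.subset ?_)
          Subtype.val_injective.injOn
        rintro _ ⟨s, hs, rfl⟩
        exact ⟨s.2, hs⟩
      refine ⟨hfin2.toFinset, fun F hF => ?_⟩
      rw [dist_eq_norm]
      refine lt_of_le_of_lt (b := ε / 2) ?_ (by linarith)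
      refine lp.norm_le_of_forall_le (by positivity) fun t => ?_
      have : ((∑ s ∈ F, lp.single ⊤ s (Λ (s : X)) : lp (fun _ : S => ℂ) ⊤) - V Λ) t
          = (if t ∈ F then Λ (t : X) else 0) - Λ (t : X) := by
        rw [lp.coeFn_sub, lp.coeFn_sum]
        simp [Finset.sum_apply, lp.single_apply, Pi.single_apply, hVapp]
      rw [this]
      split_ifs with ht
      · simp; positivity
      · have h3 : ‖(t : X)‖ < ε / 2 / (‖Λ‖ + 1) := by
          by_contra hc
          exact ht (hF (by simpa using hc))
        rw [zero_sub, norm_neg]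
        have h4 : 0 ≤ ‖Λ‖ := norm_nonneg _
        rw [lt_div_iff₀ (by positivity)] at h3
        have h5 := Λ.le_opNorm (t : X)
        have h6 : 0 ≤ ‖(t : X)‖ := norm_nonneg _
        nlinarith
    have h3 := h2.mapL φ
    refine h3.unique ?_
    convert h1 using 2 with s
    rw [hsingle, map_smul, smul_eq_mul, mul_comm]
  refine ⟨∑' s : S, α s • (s : X), fun m hm => ?_, ?_⟩
  · rw [← hrep]; exact hφ0 _ ⟨m, hm, rfl⟩
  · rw [← hrep]; exact hφ1

theorem krein_smulian_sub {X : Type*} [NormedAddCommGroup X] [NormedSpace ℂ X] [CompleteSpace X]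
    (M : Submodule ℂ (X →L[ℂ] ℂ))
    (hM : ∀ R : ℝ, ∀ U : Ultrafilter (X →L[ℂ] ℂ),
      (∀ᶠ Λ in (U : Filter (X →L[ℂ] ℂ)), Λ ∈ M ∧ ‖Λ‖ ≤ R) →
      ∀ Λ0 : X →L[ℂ] ℂ, (∀ x, Tendsto (fun Λ : X →L[ℂ] ℂ => Λ x) U (nhds (Λ0 x))) → Λ0 ∈ M)
    {Λ0 : X →L[ℂ] ℂ} (h0 : Λ0 ∈ wstarClosure (M : Set (X →L[ℂ] ℂ))) : Λ0 ∈ M := by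
  by_contra hnot
  have hclosed : IsClosed (M : Set (X →L[ℂ] ℂ)) := by
    rw [isClosed_iff_ultrafilter]
    intro Λ U hU hUM
    refine hM (‖Λ‖ + 1) U ?_ Λ ?_
    · have h1 : ∀ᶠ Λ' in (U : Filter (X →L[ℂ] ℂ)), ‖Λ'‖ < ‖Λ‖ + 1 :=
        hU (continuous_norm.continuousAt.eventually_lt continuousAt_const (by simp))
      filter_upwards [h1, hUM] with Λ' h2 h3
      exact ⟨h3, h2.le⟩
    · intro x
      exact ((ContinuousLinearMap.apply ℂ ℂ x).continuous.tendsto Λ).mono_left hU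
  obtain ⟨d, hd, hball⟩ := Metric.isOpen_iff.1 hclosed.isOpen_compl Λ0 hnot
  let Λ1 : X →L[ℂ] ℂ := ((2 / d : ℝ) : ℂ) • Λ0
  have hdc : ((2 / d : ℝ) : ℂ) ≠ 0 := by
    have : (2 / d : ℝ) ≠ 0 := by positivity
    exact_mod_cast this
  have hfar : ∀ m ∈ M, 1 < ‖Λ1 - m‖ := by
    intro m hm
    by_contra hle
    push Not at hle
    have hmem : ((2 / d : ℝ) : ℂ)⁻¹ • m ∈ M := M.smul_mem _ hm
    refine hball ?_ hmem
    rw [mem_ball, dist_eq_norm, ← norm_neg, neg_sub]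
    have : Λ0 - ((2 / d : ℝ) : ℂ)⁻¹ • m = ((2 / d : ℝ) : ℂ)⁻¹ • (Λ1 - m) := by
      rw [smul_sub, smul_smul, inv_mul_cancel₀ hdc, one_smul]
    rw [this, norm_smul, norm_inv, Complex.norm_real, Real.norm_of_nonneg (by positivity), inv_div]
    nlinarith
  obtain ⟨S, hS1, hS2⟩ := ks_null {Λ | Λ1 - Λ ∈ M} (by
    intro R U hU Λ hΛ
    have h2 := hM (‖Λ1‖ + R) (U.map (fun Λ => Λ1 - Λ)) (by
      show ∀ᶠ Λ in (U : Filter (X →L[ℂ] ℂ)), Λ1 - Λ ∈ M ∧ ‖Λ1 - Λ‖ ≤ ‖Λ1‖ + R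
      filter_upwards [hU] with Λ' h
      exact ⟨h.1, (norm_sub_le _ _).trans (by linarith [h.2])⟩) (Λ1 - Λ) (by
      intro x
      show Tendsto (fun Λ' : X →L[ℂ] ℂ => (Λ1 - Λ') x) U _
      simpa using (hΛ x).const_sub (Λ1 x))
    exact h2) (by
    intro Λ hΛ
    simpa using hfar _ hΛ)
  obtain ⟨x, hx1, hx2⟩ := ks_rep M Λ1 S hS1 (by
    intro m hm
    exact hS2 (Λ1 - m) (by simpa using hm))
  have hx3 : Λ0 x ≠ 0 := by
    intro h; exact hx2 (by simp [Λ1, h])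
  obtain ⟨m, hm, h⟩ := h0 {x} ‖Λ0 x‖ (norm_pos_iff.2 hx3)
  have := h x (by simp)
  rw [hx1 m hm] at this
  simp at this

lemma hMean_nonneg (p : ℝ) (f : ℂ → ℂ) (r : ℝ) : 0 ≤ hMean p f r :=
  integral_nonneg fun _ => Real.rpow_nonneg (norm_nonneg _) _

lemma mem_uDisc {z : ℂ} : z ∈ uDisc ↔ ‖z‖ < 1 := by simp [uDisc]

lemma tc_bound {h : ℂ → ℂ} (hh : AnalyticOnDisc h) {R B : ℝ} (hR0 : 0 < R) (hR : R < 1)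
    (hB : ∀ z : ℂ, ‖z‖ ≤ R → ‖h z‖ ≤ B) (n : ℕ) : ‖tc h n‖ * R ^ n ≤ B := by
  have h1 := Complex.norm_iteratedDeriv_le_of_forall_mem_sphere_norm_le (c := 0) (f := h) (C := B) n hR0
    (by
      apply DifferentiableOn.diffContOnCl
      rw [closure_ball _ hR0.ne']
      refine hh.mono fun z hz => ?_
      rw [mem_uDisc]
      have : ‖z‖ ≤ R := by simpa using hz
      linarith)
    (fun z hz => hB z (by simpa using (le_of_eq (by simpa using hz) : ‖z‖ ≤ R)))
  have hf : (0 : ℝ) < n.factorial := by exact_mod_cast n.factorial_pos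
  rw [le_div_iff₀ (by positivity)] at h1
  rw [tc, norm_mul, norm_inv]
  simp only [Complex.norm_natCast]
  rw [mul_assoc, inv_mul_le_iff₀ hf]
  exact h1

lemma normal_family {ι : Type*} (U : Ultrafilter ι) (h : ι → ℂ → ℂ) {p A : ℝ} (hp : 0 < p)
    (hh : ∀ i, AnalyticOnDisc (h i))
    (hA : ∀ i, ∀ r ∈ Set.Ioo (0:ℝ) 1, hMean p (h i) r ≤ A) :
    ∃ h0 : ℂ → ℂ, MemHp p h0 ∧ ∀ z ∈ uDisc, Tendsto (fun i => h i z) U (nhds (h0 z)) := by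
  let B : ℝ → ℝ := fun R => ((1 + Real.sqrt R) / (1 - Real.sqrt R) * A) ^ (1 / p)
  have hB : ∀ i (R : ℝ), 0 < R → R < 1 → ∀ z : ℂ, ‖z‖ ≤ R → ‖h i z‖ ≤ B R :=
    fun i R h0 h1 => growth (hh i) hp (hA i) h0 h1
  have hB0 : ∀ i (R : ℝ), 0 < R → R < 1 → 0 ≤ B R := fun i R h0 h1 =>
    (norm_nonneg _).trans (hB i R h0 h1 0 (by simpa using h0.le))
  have hT : ∀ i (R : ℝ), 0 < R → R < 1 → ∀ n, ‖tc (h i) n‖ * R ^ n ≤ B R :=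
    fun i R h0 h1 n => tc_bound (hh i) h0 h1 (hB i R h0 h1) n
  have hlim : ∀ n, ∃ c : ℂ, Tendsto (fun i => tc (h i) n) U (nhds c) := by
    intro n
    have hc := isCompact_closedBall (0 : ℂ) (B (1/2) / (1/2) ^ n)
    rw [isCompact_iff_ultrafilter_le_nhds] at hc
    obtain ⟨c, -, hc2⟩ := hc (U.map fun i => tc (h i) n) (by
      rw [Filter.le_principal_iff]
      show ∀ᶠ i in (U : Filter ι), tc (h i) n ∈ closedBall (0 : ℂ) (B (1/2) / (1/2) ^ n)
      refine Eventually.of_forall fun i => ?_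
      rw [mem_closedBall_zero_iff, le_div_iff₀ (by positivity)]
      exact hT i (1/2) (by norm_num) (by norm_num) n)
    exact ⟨c, hc2⟩
  choose c hc using hlim
  have hcB : ∀ (R : ℝ), 0 < R → R < 1 → ∀ n, ‖c n‖ * R ^ n ≤ B R := by
    intro R h0 h1 n
    exact le_of_tendsto ((hc n).norm.mul_const _) (Eventually.of_forall fun i => hT i R h0 h1 n)
  have hgeo : ∀ (ρ : ℝ), 0 < ρ → ρ < 1 → ∃ R : ℝ, 0 < R ∧ R < 1 ∧ ρ < R := by
    intro ρ h0 h1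
    exact ⟨(ρ + 1) / 2, by linarith, by linarith, by linarith⟩
  have hterm : ∀ {a : ℂ} {ρ R b : ℝ} {n : ℕ}, 0 < ρ → 0 < R → ‖a‖ * R ^ n ≤ b →
      ‖a‖ * ρ ^ n ≤ b * (ρ / R) ^ n := by
    intro a ρ R b n hρ hR hab
    have : ‖a‖ * ρ ^ n = (‖a‖ * R ^ n) * (ρ / R) ^ n := by
      rw [div_pow]; field_simp
    rw [this]
    exact mul_le_mul_of_nonneg_right hab (by positivity)
  have hsumgeo : ∀ {ρ R : ℝ} (b : ℝ), 0 < ρ → 0 < R → ρ < R →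
      Summable (fun n : ℕ => b * (ρ / R) ^ n) := by
    intro ρ R b hρ hR hlt
    exact (summable_geometric_of_lt_one (by positivity) ((div_lt_one hR).2 hlt)).mul_left b
  have hcsum : ∀ (ρ : ℝ), 0 < ρ → ρ < 1 → Summable (fun n => ‖c n‖ * ρ ^ n) := by
    intro ρ h0 h1
    obtain ⟨R, hR0, hR1, hlt⟩ := hgeo ρ h0 h1
    exact Summable.of_nonneg_of_le (fun n => by positivity)
      (fun n => hterm h0 hR0 (hcB R hR0 hR1 n)) (hsumgeo (B R) h0 hR0 hlt)
  let h0 : ℂ → ℂ := fun z => ∑' n, c n * z ^ n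
  have hunif : ∀ (ρ : ℝ), 0 < ρ → ρ < 1 → ∀ ε > (0 : ℝ), ∀ᶠ i in (U : Filter ι),
      ∀ z : ℂ, ‖z‖ ≤ ρ → ‖h0 z - h i z‖ < ε := by
    intro ρ hρ0 hρ1 ε hε
    obtain ⟨R, hR0, hR1, hlt⟩ := hgeo ρ hρ0 hρ1
    have hD : Tendsto (fun i => ∑' n, ‖c n - tc (h i) n‖ * ρ ^ n) U (nhds (∑' n : ℕ, (0:ℝ))) := by
      refine tendsto_tsum_of_dominated_convergence (hsumgeo (2 * B R) hρ0 hR0 hlt) ?_ ?_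
      · intro n
        have := ((hc n).const_sub (c n)).norm.mul_const (ρ ^ n)
        simpa using this
      · refine Eventually.of_forall fun i n => ?_
        rw [Real.norm_of_nonneg (by positivity)]
        refine hterm hρ0 hR0 ?_
        have h1 := hcB R hR0 hR1 n
        have h2 := hT i R hR0 hR1 n
        have h3 := mul_le_mul_of_nonneg_right (norm_sub_le (c n) (tc (h i) n))
          (pow_nonneg hR0.le n)
        linarith
    rw [tsum_zero] at hD
    filter_upwards [hD.eventually_lt_const hε] with i hi z hz
    have hz1 : ‖z‖ < 1 := by linarith
    have hs1 : Summable (fun n => c n * z ^ n) := by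
      refine Summable.of_norm_bounded (hcsum ρ hρ0 hρ1) fun n => ?_
      rw [norm_mul, norm_pow]
      gcongr
    have hs2 := hasSum_tc (hh i) hz1
    have hs3 : Summable (fun n => ‖c n - tc (h i) n‖ * ρ ^ n) := by
      refine Summable.of_nonneg_of_le (fun n => by positivity) (fun n => ?_)
        ((hcsum ρ hρ0 hρ1).add (summable_norm_tc (hh i) hρ0.le hρ1))
      rw [← add_mul]
      exact mul_le_mul_of_nonneg_right (norm_sub_le _ _) (pow_nonneg hρ0.le n)
    have hE : HasSum (fun n => (c n - tc (h i) n) * z ^ n) (h0 z - h i z) := by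
      have := hs1.hasSum.sub hs2
      simpa [sub_mul] using this
    rw [← hE.tsum_eq]
    refine lt_of_le_of_lt (tsum_of_norm_bounded hs3.hasSum fun n => ?_) hi
    rw [norm_mul, norm_pow]
    gcongr
  have hpt : ∀ z ∈ uDisc, Tendsto (fun i => h i z) U (nhds (h0 z)) := by
    intro z hz
    rw [mem_uDisc] at hz
    rw [Metric.tendsto_nhds]
    intro ε hε
    filter_upwards [hunif ((‖z‖ + 1) / 2) (by positivity) (by linarith) ε hε] with i hi
    rw [dist_comm, dist_eq_norm]
    exact hi z (by linarith)
  have han : AnalyticOnDisc h0 := by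
    refine TendstoLocallyUniformlyOn.differentiableOn (φ := (U : Filter ι)) (F := h) ?_
      (Eventually.of_forall hh) isOpen_ball
    rw [Metric.tendstoLocallyUniformlyOn_iff]
    intro ε hε z hz
    have hz' := mem_uDisc.1 hz
    refine ⟨ball 0 ((‖z‖ + 1) / 2), mem_nhdsWithin_of_mem_nhds (isOpen_ball.mem_nhds ?_), ?_⟩
    · rw [mem_ball_zero_iff]; linarith
    · filter_upwards [hunif ((‖z‖ + 1) / 2) (by positivity) (by linarith) ε hε] with i hi y hy
      rw [dist_eq_norm]
      exact hi y (by rw [mem_ball_zero_iff] at hy; exact hy.le)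
  refine ⟨h0, ⟨han, A, ?_⟩, hpt⟩
  rintro _ ⟨r, ⟨hr0, hr1⟩, rfl⟩
  have hseq : ∀ k : ℕ, ∃ i, ∀ z : ℂ, ‖z‖ ≤ r → ‖h0 z - h i z‖ < 1 / ((k : ℝ) + 1) := fun k =>
    (hunif r hr0 hr1 (1 / ((k : ℝ) + 1)) (by positivity)).exists
  choose i hi using hseq
  have hlim : Tendsto (fun k => hMean p (h (i k)) r) atTop (nhds (hMean p h0 r)) := by
    refine tendsto_integral_of_dominated_convergence (fun _ => B r ^ p) ?_ ?_ ?_ ?_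
    · intro k
      exact (cont_rpow_circle (hh (i k)) hp.le hr0.le hr1).aestronglyMeasurable
    · exact integrable_arcM continuous_const
    · intro k
      refine Eventually.of_forall fun θ => ?_
      rw [Real.norm_of_nonneg (by positivity)]
      exact Real.rpow_le_rpow (norm_nonneg _)
        (hB (i k) r hr0 hr1 _ (norm_mul_bpt hr0.le θ).le) hp.le
    · refine Eventually.of_forall fun θ => ?_
      have hz : ‖(r:ℂ) * bpt θ‖ ≤ r := (norm_mul_bpt hr0.le θ).le
      have ht : Tendsto (fun k => h (i k) ((r:ℂ) * bpt θ)) atTop (nhds (h0 ((r:ℂ) * bpt θ))) := by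
        rw [tendsto_iff_norm_sub_tendsto_zero]
        refine squeeze_zero (fun _ => norm_nonneg _) (fun k => ?_)
          tendsto_one_div_add_atTop_nhds_zero_nat
        rw [norm_sub_rev]
        exact (hi k _ hz).le
      exact ht.norm.rpow_const (Or.inr hp.le)
  exact le_of_tendsto hlim (Eventually.of_forall fun k => hA (i k) r ⟨hr0, hr1⟩)

lemma MemHp_add {p : ℝ} (hp : 0 < p) {f g : ℂ → ℂ} (hf : MemHp p f) (hg : MemHp p g) :
    MemHp p (fun z => f z + g z) := by
  obtain ⟨a, ha⟩ := hf.2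
  obtain ⟨b, hb⟩ := hg.2
  refine ⟨DifferentiableOn.add hf.1 hg.1, 2 ^ p * (a + b), ?_⟩
  rintro _ ⟨r, hr, rfl⟩
  have h1 : hMean p (fun z => f z + g z) r ≤ 2 ^ p * (hMean p f r + hMean p g r) := by
    unfold hMean
    have i1 := integrable_arcM (cont_rpow_circle hf.1 hp.le hr.1.le hr.2)
    have i2 := integrable_arcM (cont_rpow_circle hg.1 hp.le hr.1.le hr.2)
    rw [← integral_add i1 i2, ← integral_const_mul]
    refine integral_mono (integrable_arcM (cont_rpow_circle (DifferentiableOn.add hf.1 hg.1)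
      hp.le hr.1.le hr.2)) ((i1.add i2).const_mul _) fun θ => ?_
    show ‖f ((r:ℂ) * bpt θ) + g ((r:ℂ) * bpt θ)‖ ^ p ≤
      2 ^ p * (‖f ((r:ℂ) * bpt θ)‖ ^ p + ‖g ((r:ℂ) * bpt θ)‖ ^ p)
    generalize f ((r:ℂ) * bpt θ) = x
    generalize g ((r:ℂ) * bpt θ) = y
    have h2 : ‖x + y‖ ≤ 2 * max ‖x‖ ‖y‖ := (norm_add_le x y).trans
      (by linarith [le_max_left ‖x‖ ‖y‖, le_max_right ‖x‖ ‖y‖])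
    have h3 : ‖x + y‖ ^ p ≤ 2 ^ p * (max ‖x‖ ‖y‖) ^ p := by
      rw [← Real.mul_rpow (by norm_num) (by positivity)]
      exact Real.rpow_le_rpow (norm_nonneg _) h2 hp.le
    refine h3.trans (mul_le_mul_of_nonneg_left ?_ (by positivity))
    have h4 : 0 ≤ ‖x‖ ^ p := by positivity
    have h5 : 0 ≤ ‖y‖ ^ p := by positivity
    rcases max_choice ‖x‖ ‖y‖ with h | h <;> rw [h] <;> linarith
  refine h1.trans (mul_le_mul_of_nonneg_left ?_ (by positivity))
  exact add_le_add (ha ⟨r, hr, rfl⟩) (hb ⟨r, hr, rfl⟩)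

lemma MemHp_smul {p : ℝ} (c : ℂ) {f : ℂ → ℂ} (hf : MemHp p f) :
    MemHp p (fun z => c * f z) := by
  obtain ⟨a, ha⟩ := hf.2
  refine ⟨DifferentiableOn.const_mul hf.1 c, ‖c‖ ^ p * a, ?_⟩
  rintro _ ⟨r, hr, rfl⟩
  have : hMean p (fun z => c * f z) r = ‖c‖ ^ p * hMean p f r := by
    unfold hMean
    rw [← integral_const_mul]
    congr 1; ext θ
    rw [norm_mul, Real.mul_rpow (norm_nonneg _) (norm_nonneg _)]
  rw [this]
  exact mul_le_mul_of_nonneg_left (ha ⟨r, hr, rfl⟩) (by positivity)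

lemma MemHp_poly {p : ℝ} (hp : 0 < p) (q : Polynomial ℂ) : MemHp p (fun z => q.eval z) := by
  obtain ⟨C, hC⟩ := (isCompact_closedBall (0 : ℂ) 1).exists_bound_of_continuousOn
    q.continuous.continuousOn
  have hd : AnalyticOnDisc (fun z => q.eval z) := q.differentiable.differentiableOn
  refine ⟨hd, C ^ p, ?_⟩
  rintro _ ⟨r, hr, rfl⟩
  have : hMean p (fun z => q.eval z) r ≤ ∫ _, C ^ p ∂arcM := by
    refine integral_mono (integrable_arcM (cont_rpow_circle hd hp.le hr.1.le hr.2))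
      (integrable_const _) fun θ => ?_
    refine Real.rpow_le_rpow (norm_nonneg _) (hC _ ?_) hp.le
    rw [mem_closedBall_zero_iff, norm_mul_bpt hr.1.le]; exact hr.2.le
  simpa using this

lemma summable_aux (a : ℕ → ℂ) (hF : AnalyticOnDisc (fun z => ∑' n, a n * z ^ n)) (ha : a 0 ≠ 0)
    {z : ℂ} (hz : ‖z‖ < 1) : Summable (fun n => a n * z ^ n) := by
  by_contra hns
  have hzero : ∀ w : ℂ, ‖z‖ ≤ ‖w‖ → ∑' n, a n * w ^ n = 0 := by
    intro w hw
    refine tsum_eq_zero_of_not_summable fun hs => hns ?_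
    refine Summable.of_norm_bounded hs.norm fun n => ?_
    rw [norm_mul, norm_mul, norm_pow, norm_pow]
    gcongr
  let w : ℂ := (((‖z‖ + 1) / 2 : ℝ) : ℂ)
  have hw : ‖w‖ = (‖z‖ + 1) / 2 := by
    simp only [w]; rw [Complex.norm_real, Real.norm_of_nonneg (by positivity)]
  have hw1 : w ∈ uDisc := by rw [mem_uDisc, hw]; linarith
  have hA : AnalyticOnNhd ℂ (fun z => ∑' n, a n * z ^ n) uDisc := hF.analyticOnNhd isOpen_ball
  have hE := hA.eqOn_zero_of_preconnected_of_eventuallyEq_zero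
    (convex_ball (0:ℂ) 1).isPreconnected hw1 (by
      have : ∀ᶠ y in nhds w, ‖z‖ < ‖y‖ :=
        continuousAt_const.eventually_lt continuous_norm.continuousAt (by rw [hw]; linarith)
      filter_upwards [this] with y hy
      exact hzero y hy.le)
  have h0 := hE (x := 0) (by simp [uDisc])
  apply ha
  simp only [Pi.zero_apply] at h0
  rw [tsum_eq_single 0 (by intro n hn; simp [hn])] at h0
  simpa using h0

section cauchyDual

variable {X : Type*} [NormedAddCommGroup X] [NormedSpace ℂ X]

lemma summable_dual (e : ℕ → X) (he0 : e 0 ≠ 0)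
    (hF : ∀ Λ : X →L[ℂ] ℂ, AnalyticOnDisc (cauchyDualFn e Λ))
    (Λ : X →L[ℂ] ℂ) {z : ℂ} (hz : ‖z‖ < 1) :
    Summable (fun n => (starRingEnd ℂ) (Λ (e n)) * z ^ n) := by
  have main : ∀ Λ : X →L[ℂ] ℂ, Λ (e 0) ≠ 0 →
      Summable (fun n => (starRingEnd ℂ) (Λ (e n)) * z ^ n) := by
    intro Λ h
    exact summable_aux (fun n => (starRingEnd ℂ) (Λ (e n))) (hF Λ) (by simpa using h) hz
  by_cases h : Λ (e 0) = 0
  · obtain ⟨Λ1, h1⟩ := SeparatingDual.exists_ne_zero (R := ℂ) he0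
    have s1 := main Λ1 h1
    have s2 := main (Λ + Λ1) (by simpa [h] using h1)
    have := s2.sub s1
    refine this.congr fun n => ?_
    simp only [add_apply, map_add]
    ring
  · exact main Λ h

lemma dual_bound (e : ℕ → X) (he0 : e 0 ≠ 0)
    (hF : ∀ Λ : X →L[ℂ] ℂ, AnalyticOnDisc (cauchyDualFn e Λ)) {ρ : ℝ} (h0 : 0 < ρ) (h1 : ρ < 1) :
    ∃ K : ℝ, ∀ (Λ : X →L[ℂ] ℂ) (n : ℕ), ‖Λ (e n)‖ * ρ ^ n ≤ K * ‖Λ‖ := by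
  let g : ℕ → (X →L[ℂ] ℂ) →L[ℂ] ℂ := fun n => ((ρ : ℂ) ^ n) • ContinuousLinearMap.apply ℂ ℂ (e n)
  have hg : ∀ n Λ, ‖g n Λ‖ = ‖Λ (e n)‖ * ρ ^ n := by
    intro n Λ
    simp [g, abs_of_pos h0, mul_comm]
  obtain ⟨K, hK⟩ := banach_steinhaus (g := g) (by
    intro Λ
    have hs := (summable_dual e he0 hF Λ (z := (ρ : ℂ)) (by simpa [abs_of_pos h0] using h1)).norm
    obtain ⟨C, hC⟩ := hs.tendsto_atTop_zero.bddAbove_range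
    refine ⟨C, fun n => ?_⟩
    have := hC ⟨n, rfl⟩
    rw [hg]
    simpa [abs_of_pos h0] using this)
  refine ⟨K, fun Λ n => ?_⟩
  rw [← hg]
  exact ((g n).le_opNorm Λ).trans (mul_le_mul_of_nonneg_right (hK n) (norm_nonneg _))

lemma dual_conv (e : ℕ → X) (he0 : e 0 ≠ 0)
    (hF : ∀ Λ : X →L[ℂ] ℂ, AnalyticOnDisc (cauchyDualFn e Λ)) (R : ℝ)
    (U : Ultrafilter (X →L[ℂ] ℂ)) (hU : ∀ᶠ Λ in (U : Filter (X →L[ℂ] ℂ)), ‖Λ‖ ≤ R)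
    (Λ0 : X →L[ℂ] ℂ) (hΛ : ∀ x, Tendsto (fun Λ : X →L[ℂ] ℂ => Λ x) U (nhds (Λ0 x)))
    {z : ℂ} (hz : ‖z‖ < 1) :
    Tendsto (fun Λ : X →L[ℂ] ℂ => cauchyDualFn e Λ z) U (nhds (cauchyDualFn e Λ0 z)) := by
  have hzn : 0 ≤ ‖z‖ := norm_nonneg z
  set ρ : ℝ := (‖z‖ + 1) / 2 with hρ
  have h0 : 0 < ρ := by positivity
  have h1 : ρ < 1 := by rw [hρ]; linarith
  have h2 : ‖z‖ < ρ := by rw [hρ]; linarith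
  obtain ⟨K, hK⟩ := dual_bound e he0 hF h0 h1
  unfold cauchyDualFn
  refine tendsto_tsum_of_dominated_convergence (bound := fun n => |K| * R * (‖z‖ / ρ) ^ n)
    ((summable_geometric_of_lt_one (by positivity) ((div_lt_one h0).2 h2)).mul_left _) ?_ ?_
  · intro n
    exact (((Complex.continuous_conj.tendsto _).comp (hΛ (e n)))).mul_const _
  · filter_upwards [hU] with Λ hΛR n
    rw [norm_mul, norm_pow, RCLike.norm_conj]
    have h3 : ‖Λ (e n)‖ * ‖z‖ ^ n = (‖Λ (e n)‖ * ρ ^ n) * (‖z‖ / ρ) ^ n := by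
      rw [mul_assoc, ← mul_pow, mul_div_cancel₀ _ h0.ne']
    rw [h3]
    refine mul_le_mul_of_nonneg_right ((hK Λ n).trans ?_) (by positivity)
    exact mul_le_mul (le_abs_self K) hΛR (norm_nonneg _) (abs_nonneg _)

/-- Functionals whose Cauchy dual function is divisible by `ϑ` in `H^p`. -/
def divSub (e : ℕ → X) (he0 : e 0 ≠ 0)
    (hF : ∀ Λ : X →L[ℂ] ℂ, AnalyticOnDisc (cauchyDualFn e Λ)) (ϑ : ℂ → ℂ) (p : ℝ) (hp : 0 < p) :
    Submodule ℂ (X →L[ℂ] ℂ) where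
  carrier := {Λ | ∃ h, MemHp p h ∧ ∀ z ∈ uDisc, cauchyDualFn e Λ z = ϑ z * h z}
  zero_mem' := by
    refine ⟨fun z => (0 : Polynomial ℂ).eval z, MemHp_poly hp 0, fun z _ => ?_⟩
    simp [cauchyDualFn]
  add_mem' := by
    rintro Λ Λ' ⟨h, hh, h1⟩ ⟨h', hh', h1'⟩
    refine ⟨fun z => h z + h' z, MemHp_add hp hh hh', fun z hz => ?_⟩
    rw [mul_add, ← h1 z hz, ← h1' z hz]
    unfold cauchyDualFn
    rw [← (summable_dual e he0 hF Λ (mem_uDisc.1 hz)).tsum_add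
      (summable_dual e he0 hF Λ' (mem_uDisc.1 hz))]
    simp [add_mul]
  smul_mem' := by
    rintro c Λ ⟨h, hh, h1⟩
    refine ⟨fun z => (starRingEnd ℂ) c * h z, MemHp_smul _ hh, fun z hz => ?_⟩
    rw [mul_left_comm, ← h1 z hz]
    unfold cauchyDualFn
    rw [← tsum_mul_left]
    simp [mul_assoc]

end cauchyDual

lemma hMean_le_of_hardyNorm {p K : ℝ} (hp : 0 < p) {f : ℂ → ℂ} (hf : MemHp p f)
    (hK : hardyNorm p f ≤ K) :
    ∀ r ∈ Set.Ioo (0:ℝ) 1, hMean p f r ≤ K ^ (min 1 (1 / p))⁻¹ := by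
  intro r hr
  have hk : 0 < min 1 (1 / p) := lt_min one_pos (by positivity)
  have h1 : hMean p f r ≤ sSup (hMean p f '' Set.Ioo 0 1) := le_csSup hf.2 ⟨r, hr, rfl⟩
  have h0 : 0 ≤ sSup (hMean p f '' Set.Ioo 0 1) := (hMean_nonneg p f r).trans h1
  refine h1.trans ?_
  rw [← Real.rpow_rpow_inv h0 hk.ne']
  exact Real.rpow_le_rpow (by positivity) hK (by positivity)

/-- Theorem 1.4: for a Banach space `X` of analytic functions on 𝔻 in
which polynomials are dense, with `limsup ‖zⁿ‖^{1/n} ≤ 1`, continuously embedded in `H²`,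
if the Cauchy dual `X'` embeds continuously in some `H^p`, `p > 0`, then `(X, ϑ)` has the
`(P)`-property for every inner function `ϑ`. -/
theorem dual_embeds_in_Hp_implies_Pproperty
    {X : Type*} [NormedAddCommGroup X] [NormedSpace ℂ X] [CompleteSpace X]
    (T : X →ₗ[ℂ] (ℂ → ℂ)) (hinj : Function.Injective T)
    (han : ∀ x : X, AnalyticOnDisc (T x))
    (e : ℕ → X) (he : ∀ n : ℕ, T (e n) = fun z => z ^ n)
    (hpolydense : Dense {x : X | ∃ q : Polynomial ℂ, T x = fun z => q.eval z})
    (hmono : Filter.limsup (fun n : ℕ => ‖e n‖ ^ (1 / (n : ℝ))) Filter.atTop ≤ 1)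
    (hH2 : ∀ x : X, MemHp 2 (T x))
    (hembed : ∃ C : ℝ, 0 < C ∧ ∀ x : X, hardyNorm 2 (T x) ≤ C * ‖x‖)
    (hdual : ∃ p : ℝ, 0 < p ∧ ∃ C : ℝ, 0 < C ∧ ∀ Λ : X →L[ℂ] ℂ,
      MemHp p (cauchyDualFn e Λ) ∧ hardyNorm p (cauchyDualFn e Λ) ≤ C * ‖Λ‖) :
    ∀ ϑ : ℂ → ℂ, IsInner ϑ → PProperty e ϑ := by
  classical
  intro ϑ hϑ Λ hΛ hΛ2
  obtain ⟨p, hp, C, hC, hD⟩ := hdual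
  have he0 : e 0 ≠ 0 := by
    intro h
    have h1 := he 0
    rw [h, map_zero] at h1
    have := congrFun h1 0
    simp at this
  have hF : ∀ Λ : X →L[ℂ] ℂ, AnalyticOnDisc (cauchyDualFn e Λ) := fun Λ => (hD Λ).1.1
  have hmem : Λ ∈ divSub e he0 hF ϑ p hp := by
    refine krein_smulian_sub (divSub e he0 hF ϑ p hp) ?_ ?_
    · intro R U hU Λ0 hΛ0
      set A : ℝ := (C * |R|) ^ (min 1 (1 / p))⁻¹ with hA
      have hA0 : 0 ≤ A := by positivity
      have hex : ∀ Λ' : X →L[ℂ] ℂ, ∃ h : ℂ → ℂ, AnalyticOnDisc h ∧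
          (∀ r ∈ Set.Ioo (0:ℝ) 1, hMean p h r ≤ A) ∧
          (Λ' ∈ divSub e he0 hF ϑ p hp ∧ ‖Λ'‖ ≤ R →
            ∀ z ∈ uDisc, cauchyDualFn e Λ' z = ϑ z * h z) := by
        intro Λ'
        by_cases hg : Λ' ∈ divSub e he0 hF ϑ p hp ∧ ‖Λ'‖ ≤ R
        · obtain ⟨h, hh, hfac⟩ := hg.1
          refine ⟨h, hh.1, ?_, fun _ => hfac⟩
          refine inner_div hϑ hp hp hh (hF Λ') hfac ?_
          refine hMean_le_of_hardyNorm hp (hD Λ').1 ((hD Λ').2.trans ?_)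
          exact mul_le_mul_of_nonneg_left (hg.2.trans (le_abs_self R)) hC.le
        · refine ⟨fun _ => 0, differentiableOn_const _, fun r _ => ?_, fun h => absurd h hg⟩
          simpa [hMean, Real.zero_rpow hp.ne'] using hA0
      choose H hH1 hH2 hH3 using hex
      obtain ⟨h0, hh0, hlim⟩ := normal_family U H hp hH1 hH2
      refine ⟨h0, hh0, fun z hz => ?_⟩
      have t1 := dual_conv e he0 hF R U (hU.mono fun _ h => h.2) Λ0 hΛ0 (mem_uDisc.1 hz)
      have t2 := (hlim z hz).const_mul (ϑ z)
      refine tendsto_nhds_unique t1 (t2.congr' ?_)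
      filter_upwards [hU] with Λ' h
      exact (hH3 Λ' h z hz).symm
    · intro F ε hε
      obtain ⟨Λ', ⟨q, hq⟩, h⟩ := hΛ F ε hε
      exact ⟨Λ', ⟨fun z => q.eval z, MemHp_poly hp q, fun z _ => congrFun hq z⟩, h⟩
  obtain ⟨h, hh, hfac⟩ := hmem
  obtain ⟨A, hA⟩ := hΛ2.2
  refine ⟨h, ⟨hh.1, A, ?_⟩, hfac⟩
  rintro _ ⟨r, hr, rfl⟩
  exact inner_div hϑ hp two_pos hh hΛ2.1 hfac (fun r hr => hA ⟨r, hr, rfl⟩) r hr
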